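/- arXiv:1909.01516 — 4 statements merged into one kernel-verified Lean document; each statement's English description precedes it below -/
import Mathlib

section
/- Let H_L be a frustration-free local Hamiltonian on the D-dimensional lattice L = [1:n_1]×…×[1:n_D] as in the setup, with parameters g, L ≤ (3D)^D, spectral gap γ, and local gaps γ(t_1,…,t_D). Suppose 2⁶·4^D·L < t_s < n_s/5 for every s ∈ [1:D], and γ ≤ g²/16^D. Then γ(t_1, t_2, …, t_D) ≤ 6^D·γ + 200·L²·g²·6^D · (1 / min_q t_q²). -/
variable {E : Type*} [NormedAddCommGroup E] [InnerProductSpace ℂ E] [FiniteDimensional ℂ E]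

/-- An orthogonal projector: a self-adjoint idempotent operator. -/
def IsProjector (P : E →L[ℂ] E) : Prop := IsSelfAdjoint P ∧ P * P = P

/-- The smallest nonzero (for a positive semidefinite operator, smallest positive)
eigenvalue of an operator. -/
noncomputable def minNonzeroEig (A : E →L[ℂ] E) : ℝ :=
  sInf {c : ℝ | 0 < c ∧ ∃ v : E, v ≠ 0 ∧ A v = (c : ℂ) • v}

/-- The unit cells of the `D`-dimensional lattice `[1:n₁]×…×[1:n_D]` (with `0`-based site
coordinates): a cell is its lower corner `c`, subject to `c s + 1 < n s` in every
direction. -/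
def Cell (D : ℕ) (N : Fin D → ℕ) : Type :=
  {c : (s : Fin D) → Fin (N s) // ∀ s, (c s : ℕ) + 1 < N s}

noncomputable instance (D : ℕ) (N : Fin D → ℕ) : Fintype (Cell D N) := by
  unfold Cell; infer_instance

/-- The `2^D` vertices of the unit cell with lower corner `c`. -/
def cellVerts {D : ℕ} {N : Fin D → ℕ} (c : (s : Fin D) → Fin (N s)) :
    Finset ((s : Fin D) → Fin (N s)) :=
  Finset.univ.filter (fun x => ∀ s, x s = c s ∨ (x s : ℕ) = (c s : ℕ) + 1)

/-- A frustration-free local Hamiltonian `H = Σ_e P_e` on the `D`-dimensional lattice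
`[1:n₁]×…×[1:n_D]` whose joint Hilbert space is `E`: `e` ranges over the unit cells, the
`P_e` are orthogonal projectors supported on the `2^D` vertices of the cell `e`, each
failing to commute with at most `g` other members of the family, which partitions into `L`
layers of pairwise commuting projectors. -/
structure LatticeSetup (D : ℕ) (N : Fin D → ℕ) (E : Type*) [NormedAddCommGroup E]
    [InnerProductSpace ℂ E] [FiniteDimensional ℂ E] where
  /-- the projectors `P_e`, supported on the vertices of the unit cell `e` -/
  P : Cell D N → (E →L[ℂ] E)
  /-- the noncommutation degree -/
  g : ℕ
  /-- the number of layers -/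
  L : ℕ
  /-- the assignment of each projector to a layer -/
  layer : Cell D N → Fin L
  proj : ∀ e, IsProjector (P e)
  /-- operational form of locality: interactions on cells with disjoint vertex sets
  commute -/
  locality : ∀ e e' : Cell D N, Disjoint (cellVerts e.1) (cellVerts e'.1) →
    Commute (P e) (P e')
  /-- each projector fails to commute with at most `g` other members of the family -/
  gbound : ∀ e : Cell D N, Nat.card {e' : Cell D N // e' ≠ e ∧ ¬ Commute (P e) (P e')} ≤ g
  /-- projectors within each layer pairwise commute -/
  layers : ∀ e e' : Cell D N, layer e = layer e' → Commute (P e) (P e')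
  /-- frustration-freeness: there is a nonzero state annihilated by every `P_e` -/
  frustFree : ∃ v : E, v ≠ 0 ∧ ∀ e, P e v = 0

namespace LatticeSetup

variable {D : ℕ} {N : Fin D → ℕ}

/-- the full Hamiltonian `H = Σ_e P_e` -/
noncomputable def Hfull (S : LatticeSetup D N E) : E →L[ℂ] E := ∑ e, S.P e

/-- the cell `e` lies inside the hyper-rectangle with lower corner `a` and side
lengths `t` -/
def cellInRect (a t : Fin D → ℕ) (e : Cell D N) : Prop :=
  ∀ s, a s ≤ (e.1 s : ℕ) ∧ (e.1 s : ℕ) + 2 ≤ a s + t s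

instance (a t : Fin D → ℕ) : DecidablePred (fun e : Cell D N => cellInRect a t e) :=
  fun e => inferInstanceAs (Decidable (∀ s, _ ∧ _))

/-- `H_R`, the Hamiltonian restricted to the hyper-rectangle `R` with lower corner `a` and
side lengths `t`: the sum of the `P_e` over cells supported inside `R` -/
noncomputable def Hrect (S : LatticeSetup D N E) (a t : Fin D → ℕ) : E →L[ℂ] E :=
  ∑ e ∈ Finset.univ.filter (fun e : Cell D N => cellInRect a t e), S.P e

/-- the spectral gap `γ` of `H` -/
noncomputable def gap (S : LatticeSetup D N E) : ℝ := minNonzeroEig S.Hfull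

/-- the local gap `γ(t₁,…,t_D)`: the minimum of the spectral gaps of `H_R` over all
hyper-rectangular regions `R ⊆ L` of dimensions `t₁×…×t_D` -/
noncomputable def localGap (S : LatticeSetup D N E) (t : Fin D → ℕ) : ℝ :=
  sInf {x : ℝ | ∃ a : Fin D → ℕ, (∀ s, a s + t s ≤ N s) ∧
    x = minNonzeroEig (S.Hrect a t)}

end LatticeSetup

/-!
Everything reduces to one direction at a time: shrinking a single side of a rectangle from `n` to
`t` can be done at the price of a factor `2` in the gap and an additive error of order `(L g / t)²`.

Cover `[0, n)` by windows of length `t` overlapping in about `t / 2` sites. The even windows are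
pairwise disjoint, and so are the odd ones; hence the Hamiltonians `H₁` and `H₂` of their unions are
sums of commuting pieces and have the gap `c` of a single window. The point is that the ground
spaces of `H₁` and `H₂` are almost orthogonal beyond the ground space of `H`. For this, let `T` be
the product of the layers of `1 - P_e`: it is the identity on the ground space, and by the
detectability lemma `T*T` is at most `1 / (1 + γ / g²)` on its complement. A Chebyshev polynomial
`p` of degree `m` with `p 1 = 1` makes `p (T*T)` decay like `1 / (1 + 2 m² γ / g²)` there, while
`p (T*T)` still has a light cone of width `2 L m`, which fits into the overlaps; so inserting it
between a ground vector of `H₁` and one of `H₂` does not change their inner product. An eigenvector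
`v` of `H` with eigenvalue `γ` then satisfies `c (1 - δ) ‖v‖² ≤ ⟨v, H₁ v⟩ + ⟨v, H₂ v⟩ ≤ 2 γ ‖v‖²`
with `δ = g² / (g² + 2 m² γ)`, and solving for `c` with `m` of order `t / L` gives the estimate.
-/

open scoped InnerProductSpace

/-- The quadratic-form inequality `c A ≤ A²`. For a positive operator it says that every nonzero
eigenvalue is at least `c`; unlike `minNonzeroEig` it is vacuous for `A = 0`. -/
def HasSpectralGap {𝕜 V : Type*} [RCLike 𝕜] [NormedAddCommGroup V] [InnerProductSpace 𝕜 V]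
    (A : V →L[𝕜] V) (c : ℝ) : Prop :=
  ∀ v, c * RCLike.re ⟪v, A v⟫_𝕜 ≤ ‖A v‖ ^ 2

section SpectralGap

variable {𝕜 V : Type*} [RCLike 𝕜] [NormedAddCommGroup V] [InnerProductSpace 𝕜 V]

lemma hasSpectralGap_zero (c : ℝ) : HasSpectralGap (0 : V →L[𝕜] V) c := fun v ↦ by simp

lemma HasSpectralGap.mono {A : V →L[𝕜] V} {c c' : ℝ} (h : HasSpectralGap A c')
    (hA : A.IsPositive) (hcc' : c ≤ c') : HasSpectralGap A c := fun v ↦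
  (mul_le_mul_of_nonneg_right hcc' (hA.re_inner_nonneg_right v)).trans (h v)

lemma HasSpectralGap.le_eigenvalue {A : V →L[𝕜] V} {c : ℝ} (h : HasSpectralGap A c) {r : ℝ} {v : V}
    (hr : 0 < r) (hv : v ≠ 0) (hAv : A v = (r : 𝕜) • v) : c ≤ r := by
  have hgap := h v
  rw [hAv, inner_smul_right, RCLike.re_ofReal_mul, inner_self_eq_norm_sq, norm_smul,
    RCLike.norm_ofReal, mul_pow, sq_abs, ← mul_assoc, sq r] at hgap
  exact le_of_mul_le_mul_right (le_of_mul_le_mul_right hgap (by positivity)) hr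

lemma re_inner_map_map_nonneg_of_commute {V : Type*} [NormedAddCommGroup V]
    [InnerProductSpace ℂ V] [CompleteSpace V] {A B : V →L[ℂ] V} (hA : A.IsPositive)
    (hB : B.IsPositive) (hAB : Commute A B) (v : V) : 0 ≤ RCLike.re ⟪A v, B v⟫_ℂ := by
  rw [hA.inner_left_eq_inner_right]
  refine ContinuousLinearMap.IsPositive.re_inner_nonneg_right (T := A * B) ?_ v
  rw [← ContinuousLinearMap.nonneg_iff_isPositive] at hA hB ⊢
  exact hAB.mul_nonneg hA hB

lemma HasSpectralGap.add {V : Type*} [NormedAddCommGroup V] [InnerProductSpace ℂ V]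
    [CompleteSpace V] {A B : V →L[ℂ] V} {c : ℝ} (hA : A.IsPositive) (hB : B.IsPositive)
    (hAB : Commute A B) (hAc : HasSpectralGap A c) (hBc : HasSpectralGap B c) :
    HasSpectralGap (A + B) c := fun v ↦ by
  rw [add_apply, inner_add_right, map_add, norm_add_sq (𝕜 := ℂ)]
  linarith [hAc v, hBc v, re_inner_map_map_nonneg_of_commute hA hB hAB v]

lemma HasSpectralGap.sum {V κ : Type*} [NormedAddCommGroup V] [InnerProductSpace ℂ V]
    [CompleteSpace V] {A : κ → V →L[ℂ] V} {c : ℝ} {s : Finset κ}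
    (hA : ∀ k ∈ s, (A k).IsPositive) (hcomm : (s : Set κ).Pairwise fun k l ↦ Commute (A k) (A l))
    (hgap : ∀ k ∈ s, HasSpectralGap (A k) c) : HasSpectralGap (∑ k ∈ s, A k) c := by
  classical
  induction s using Finset.induction_on with
  | empty => simpa using hasSpectralGap_zero c
  | insert k s hk ih =>
    rw [Finset.coe_insert, Set.pairwise_insert] at hcomm
    rw [Finset.forall_mem_insert] at hA hgap
    rw [Finset.sum_insert hk]
    exact hgap.1.add hA.1 (ContinuousLinearMap.isPositive_sum _ hA.2)
      (Commute.sum_right _ _ _ fun l hl ↦ (hcomm.2 l hl (ne_of_mem_of_not_mem hl hk).symm).1)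
      (ih hA.2 hcomm.1 hgap.2)

variable [FiniteDimensional 𝕜 V] {A : V →L[𝕜] V}

lemma inner_eigenvectorBasis_map (hA : (A : V →ₗ[𝕜] V).IsSymmetric) (v : V)
    (i : Fin (Module.finrank 𝕜 V)) :
    ⟪hA.eigenvectorBasis rfl i, A v⟫_𝕜 =
      hA.eigenvalues rfl i * ⟪hA.eigenvectorBasis rfl i, v⟫_𝕜 := by
  simpa [OrthonormalBasis.repr_apply_apply] using hA.eigenvectorBasis_apply_self_apply rfl v i

lemma re_inner_map_self_eq_sum_eigenvalues (hA : (A : V →ₗ[𝕜] V).IsSymmetric) (v : V) :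
    RCLike.re ⟪v, A v⟫_𝕜 =
      ∑ i, hA.eigenvalues rfl i * ‖⟪hA.eigenvectorBasis rfl i, v⟫_𝕜‖ ^ 2 := by
  rw [← (hA.eigenvectorBasis rfl).sum_inner_mul_inner, map_sum]
  refine Finset.sum_congr rfl fun i _ ↦ ?_
  rw [inner_eigenvectorBasis_map hA, mul_left_comm, RCLike.re_ofReal_mul, ← inner_conj_symm v,
    RCLike.conj_mul]
  norm_cast

lemma norm_map_sq_eq_sum_eigenvalues (hA : (A : V →ₗ[𝕜] V).IsSymmetric) (v : V) :
    ‖A v‖ ^ 2 =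
      ∑ i, hA.eigenvalues rfl i ^ 2 * ‖⟪hA.eigenvectorBasis rfl i, v⟫_𝕜‖ ^ 2 := by
  rw [← (hA.eigenvectorBasis rfl).sum_sq_norm_inner_right]
  refine Finset.sum_congr rfl fun i _ ↦ ?_
  rw [inner_eigenvectorBasis_map hA, norm_mul, mul_pow, RCLike.norm_ofReal, sq_abs]

lemma HasSpectralGap.mul_norm_sq_le {c : ℝ} (h : HasSpectralGap A c) (hA : A.IsPositive) {v : V}
    (hv : v ∈ (A : V →ₗ[𝕜] V).kerᗮ) : c * ‖v‖ ^ 2 ≤ RCLike.re ⟪v, A v⟫_𝕜 := by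
  have hsymm : (A : V →ₗ[𝕜] V).IsSymmetric := hA.toLinearMap.isSymmetric
  rw [re_inner_map_self_eq_sum_eigenvalues hsymm,
    ← (hsymm.eigenvectorBasis rfl).sum_sq_norm_inner_right, Finset.mul_sum]
  refine Finset.sum_le_sum fun i _ ↦ ?_
  have heig := hsymm.apply_eigenvectorBasis rfl i
  obtain h0 | hpos := (hA.toLinearMap.nonneg_eigenvalues rfl i).eq_or_lt
  · rw [← h0, RCLike.ofReal_zero, zero_smul] at heig
    simp [(Submodule.mem_orthogonal _ v).1 hv _ heig]
  · gcongr
    exact h.le_eigenvalue hpos ((hsymm.eigenvectorBasis rfl).orthonormal.ne_zero i) heig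

end SpectralGap

section MinNonzeroEig

variable {V : Type*} [NormedAddCommGroup V] [InnerProductSpace ℂ V]

lemma minNonzeroEig_nonneg (A : V →L[ℂ] V) : 0 ≤ minNonzeroEig A :=
  Real.sInf_nonneg fun _ h ↦ h.1.le

lemma minNonzeroEig_le {A : V →L[ℂ] V} {c : ℝ} (hc : 0 < c) {v : V} (hv : v ≠ 0)
    (hAv : A v = (c : ℂ) • v) : minNonzeroEig A ≤ c :=
  csInf_le ⟨0, fun _ h ↦ h.1.le⟩ ⟨hc, v, hv, hAv⟩

lemma minNonzeroEig_zero : minNonzeroEig (0 : V →L[ℂ] V) = 0 := by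
  have hempty : {c : ℝ | 0 < c ∧ ∃ v : V, v ≠ 0 ∧ (0 : V →L[ℂ] V) v = (c : ℂ) • v} = ∅ := by
    refine Set.eq_empty_of_forall_notMem fun c ⟨hc, v, hv, hAv⟩ ↦ ?_
    exact smul_ne_zero (Complex.ofReal_ne_zero.2 hc.ne') hv hAv.symm
  rw [minNonzeroEig, hempty, Real.sInf_empty]

variable {A : E →L[ℂ] E}

lemma hasSpectralGap_minNonzeroEig (hA : A.IsPositive) : HasSpectralGap A (minNonzeroEig A) := by
  intro v
  have hsymm : (A : E →ₗ[ℂ] E).IsSymmetric := hA.toLinearMap.isSymmetric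
  rw [re_inner_map_self_eq_sum_eigenvalues hsymm, norm_map_sq_eq_sum_eigenvalues hsymm,
    Finset.mul_sum]
  refine Finset.sum_le_sum fun i _ ↦ ?_
  rw [← mul_assoc, sq (hsymm.eigenvalues rfl i)]
  obtain h0 | hpos := (hA.toLinearMap.nonneg_eigenvalues rfl i).eq_or_lt
  · simp [← h0]
  · gcongr
    exact minNonzeroEig_le hpos ((hsymm.eigenvectorBasis rfl).orthonormal.ne_zero i)
      (hsymm.apply_eigenvectorBasis rfl i)

lemma exists_pos_eigenvalue (hA : A.IsPositive) (hne : A ≠ 0) :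
    ∃ c : ℝ, 0 < c ∧ ∃ v : E, v ≠ 0 ∧ A v = (c : ℂ) • v := by
  have hsymm : (A : E →ₗ[ℂ] E).IsSymmetric := hA.toLinearMap.isSymmetric
  by_contra! hno
  refine hne (ContinuousLinearMap.ext fun v ↦ ?_)
  have hzero (i) : hsymm.eigenvalues rfl i = 0 := by
    by_contra hi
    exact hno _ ((hA.toLinearMap.nonneg_eigenvalues rfl i).lt_of_ne' hi) _
      ((hsymm.eigenvectorBasis rfl).orthonormal.ne_zero i) (hsymm.apply_eigenvectorBasis rfl i)
  simpa [hzero] using norm_map_sq_eq_sum_eigenvalues hsymm v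

lemma minNonzeroEig_mem (hA : A.IsPositive) (hne : A ≠ 0) :
    0 < minNonzeroEig A ∧ ∃ v : E, v ≠ 0 ∧ A v = (minNonzeroEig A : ℂ) • v := by
  have hfinite : {c : ℝ | 0 < c ∧ ∃ v : E, v ≠ 0 ∧ A v = (c : ℂ) • v}.Finite := by
    refine ((Module.End.finite_hasEigenvalue (A : E →ₗ[ℂ] E)).preimage
      Complex.ofReal_injective.injOn).subset fun c ⟨_, v, hv, hAv⟩ ↦ ?_
    exact Module.End.hasEigenvalue_of_hasEigenvector
      (Module.End.hasEigenvector_iff.2 ⟨Module.End.mem_eigenspace_iff.2 hAv, hv⟩)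
  exact Set.Nonempty.csInf_mem (exists_pos_eigenvalue hA hne) hfinite

end MinNonzeroEig

section Chebyshev

open Polynomial

lemma one_add_sq_mul_le_eval_chebyshev_T {u : ℝ} (hu : 0 ≤ u) (n : ℕ) :
    1 + (n : ℝ) ^ 2 * u ≤ (Chebyshev.T ℝ n).eval (1 + u) := by
  suffices h : ∀ n : ℕ, 1 + (n : ℝ) ^ 2 * u ≤ (Chebyshev.T ℝ n).eval (1 + u) ∧
      (2 * n + 1) * u ≤
        (Chebyshev.T ℝ (n + 1)).eval (1 + u) - (Chebyshev.T ℝ n).eval (1 + u) from (h n).1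
  intro n
  induction n with
  | zero => simp
  | succ k ih =>
    obtain ⟨hvalue, hincrement⟩ := ih
    have hnext : 1 + ((k : ℝ) + 1) ^ 2 * u ≤ (Chebyshev.T ℝ (k + 1)).eval (1 + u) := by
      linarith
    have hindex : (k : ℤ) + 1 + 1 = k + 2 := by ring
    push_cast
    refine ⟨hnext, ?_⟩
    rw [hindex, Chebyshev.T_add_two ℝ (k : ℤ)]
    simp only [eval_sub, eval_mul, eval_ofNat, eval_X]
    have : 0 ≤ u * (((k : ℝ) + 1) ^ 2 * u) := by positivity
    nlinarith

lemma abs_eval_chebyshev_T_comp_le_one {lam z : ℝ} (hlam : 0 < lam) (hz : z ∈ Set.Icc 0 lam)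
    (m : ℕ) : |((Chebyshev.T ℝ m).comp (C (2 / lam) * X - 1)).eval z| ≤ 1 := by
  simp only [eval_comp, eval_sub, eval_mul, eval_C, eval_X, eval_one]
  apply Chebyshev.abs_eval_T_real_le_one
  have hupper : 2 / lam * z ≤ 2 := by
    rw [div_mul_eq_mul_div, div_le_iff₀ hlam]
    linarith [hz.2]
  have hlower : 0 ≤ 2 / lam * z := mul_nonneg (by positivity) hz.1
  rw [abs_le]
  constructor <;> linarith

-- The extremal polynomial is the Chebyshev polynomial of `[0, lam]`, normalised at `1`.
lemma exists_polynomial_eval_one_abs_eval_le {lam : ℝ} (h0 : 0 ≤ lam) (h1 : lam ≤ 1) {m : ℕ}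
    (hm : 0 < m) : ∃ p : ℝ[X], p.natDegree ≤ m ∧ p.eval 1 = 1 ∧
      ∀ z ∈ Set.Icc 0 lam, |p.eval z| ≤ lam / (lam + 2 * m ^ 2 * (1 - lam)) := by
  obtain rfl | hlam := h0.eq_or_lt
  · refine ⟨X ^ m, natDegree_X_pow_le m, by simp, fun z hz ↦ ?_⟩
    simp [le_antisymm hz.2 hz.1, hm.ne']
  set q : ℝ[X] := (Chebyshev.T ℝ m).comp (C (2 / lam) * X - 1)
  have hgrowth : (lam + 2 * m ^ 2 * (1 - lam)) / lam ≤ q.eval 1 := by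
    have hu : 0 ≤ 2 * (1 - lam) / lam := div_nonneg (by linarith) h0
    convert one_add_sq_mul_le_eval_chebyshev_T hu m using 1
    · field_simp
    · simp only [q, eval_comp, eval_sub, eval_mul, eval_C, eval_X, eval_one]
      congr 1
      field_simp
      ring
  have hdenom : 0 < lam + 2 * m ^ 2 * (1 - lam) :=
    add_pos_of_pos_of_nonneg hlam (mul_nonneg (by positivity) (by linarith))
  have hq : 0 < q.eval 1 := (div_pos hdenom hlam).trans_le hgrowth
  refine ⟨C (q.eval 1)⁻¹ * q, ?_, by simp [hq.ne'], fun z hz ↦ ?_⟩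
  · have hlinear : (C (2 / lam) * X - 1 : ℝ[X]).natDegree ≤ 1 := by compute_degree
    calc (C (q.eval 1)⁻¹ * q).natDegree ≤ q.natDegree := natDegree_C_mul_le _ _
      _ ≤ (Chebyshev.T ℝ m).natDegree * (C (2 / lam) * X - 1 : ℝ[X]).natDegree :=
        natDegree_comp_le
      _ ≤ m * 1 := by rw [Chebyshev.natDegree_T]; exact Nat.mul_le_mul_left _ hlinear
      _ = m := mul_one m
  · calc |(C (q.eval 1)⁻¹ * q).eval z| = (q.eval 1)⁻¹ * |q.eval z| := by
          rw [eval_mul, eval_C, abs_mul, abs_inv, abs_of_pos hq]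
      _ ≤ (q.eval 1)⁻¹ * 1 := by
          gcongr
          exact abs_eval_chebyshev_T_comp_le_one hlam hz m
      _ ≤ ((lam + 2 * m ^ 2 * (1 - lam)) / lam)⁻¹ := by rw [mul_one]; gcongr
      _ = lam / (lam + 2 * m ^ 2 * (1 - lam)) := inv_div _ _

lemma norm_aeval_star_mul_self_le {A : Type*} [CStarAlgebra A] {b : A} {lam δ : ℝ}
    (hb : ‖b‖ ^ 2 ≤ lam) {p : ℝ[X]} (hp : ∀ z ∈ Set.Icc 0 lam, |p.eval z| ≤ δ) :
    ‖aeval (star b * b) p‖ ≤ δ := by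
  have hδ : 0 ≤ δ := (abs_nonneg _).trans (hp 0 ⟨le_rfl, (sq_nonneg _).trans hb⟩)
  obtain _ | _ := subsingleton_or_nontrivial A
  · simpa [Subsingleton.elim (aeval (star b * b) p) 0] using hδ
  rw [← cfc_polynomial p (star b * b)]
  refine norm_cfc_le hδ fun z hz ↦ hp z ⟨spectrum_star_mul_self_nonneg z hz, ?_⟩
  calc z ≤ ‖z‖ := Real.le_norm_self z
    _ ≤ ‖star b * b‖ := spectrum.norm_le_norm_of_mem hz
    _ = ‖b‖ ^ 2 := by rw [CStarRing.norm_star_mul_self, sq]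
    _ ≤ lam := hb

end Chebyshev

lemma map_map_of_commute {R M : Type*} [Semiring R] [AddCommMonoid M] [TopologicalSpace M]
    [Module R M] {A B : M →L[R] M} (h : Commute A B) (v : M) : A (B v) = B (A v) :=
  congr($h.eq v)

section StarProjection

variable {𝕜 V : Type*} [RCLike 𝕜] [NormedAddCommGroup V] [InnerProductSpace 𝕜 V] [CompleteSpace V]
  {P : V →L[𝕜] V}

lemma map_map_of_isStarProjection (hP : IsStarProjection P) (v : V) : P (P v) = P v :=
  congr($hP.isIdempotentElem.eq v)

lemma re_inner_map_self_eq_norm_sq (hP : IsStarProjection P) (v : V) :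
    RCLike.re ⟪v, P v⟫_𝕜 = ‖P v‖ ^ 2 := by
  have hsymm := (ContinuousLinearMap.isSelfAdjoint_iff_isSymmetric.1 hP.isSelfAdjoint) v (P v)
  rw [ContinuousLinearMap.coe_coe, map_map_of_isStarProjection hP] at hsymm
  rw [← hsymm, inner_self_eq_norm_sq]

lemma norm_sub_map_sq (hP : IsStarProjection P) (v : V) :
    ‖v - P v‖ ^ 2 = ‖v‖ ^ 2 - ‖P v‖ ^ 2 := by
  rw [norm_sub_sq (𝕜 := 𝕜), re_inner_map_self_eq_norm_sq hP]
  ring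

lemma norm_sub_map_le (hP : IsStarProjection P) (v : V) : ‖v - P v‖ ≤ ‖v‖ := by
  rw [← sq_le_sq₀ (norm_nonneg _) (norm_nonneg _), norm_sub_map_sq hP]
  linarith [sq_nonneg ‖P v‖]

lemma norm_map_le_of_isStarProjection (hP : IsStarProjection P) (v : V) : ‖P v‖ ≤ ‖v‖ := by
  rw [← sq_le_sq₀ (norm_nonneg _) (norm_nonneg _)]
  linarith [norm_sub_map_sq hP v, sq_nonneg ‖v - P v‖]

variable {ι : Type*} {P : ι → V →L[𝕜] V}

lemma isPositive_sum_of_isStarProjection (hP : ∀ i, IsStarProjection (P i)) (s : Finset ι) :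
    (∑ i ∈ s, P i).IsPositive :=
  ContinuousLinearMap.isPositive_sum _ fun i _ ↦ .of_isStarProjection (hP i)

lemma re_inner_sum_map_self (hP : ∀ i, IsStarProjection (P i)) (s : Finset ι) (v : V) :
    RCLike.re ⟪v, (∑ i ∈ s, P i) v⟫_𝕜 = ∑ i ∈ s, ‖P i v‖ ^ 2 := by
  rw [sum_apply, inner_sum, map_sum]
  exact Finset.sum_congr rfl fun i _ ↦ re_inner_map_self_eq_norm_sq (hP i) v

lemma sum_map_eq_zero_iff (hP : ∀ i, IsStarProjection (P i)) (s : Finset ι) (v : V) :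
    (∑ i ∈ s, P i) v = 0 ↔ ∀ i ∈ s, P i v = 0 := by
  refine ⟨fun h ↦ ?_, fun h ↦ by rw [sum_apply, Finset.sum_eq_zero h]⟩
  have hsum : ∑ i ∈ s, ‖P i v‖ ^ 2 = 0 := by simp [← re_inner_sum_map_self hP, h]
  simpa using (Finset.sum_eq_zero_iff_of_nonneg fun i _ ↦ sq_nonneg _).1 hsum

end StarProjection

/-- The ordered product of the complements `1 - P i` along a list, the last entry acting first.
For projections this is the (possibly partial) detectability-lemma operator. -/
def complProd {ι R : Type*} [Ring R] (P : ι → R) (l : List ι) : R :=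
  (l.map fun i ↦ 1 - P i).prod

section ComplProd

variable {ι R : Type*} [Ring R] (P : ι → R)

@[simp]
lemma complProd_nil : complProd P [] = 1 := by
  simp [complProd]

lemma complProd_cons (i : ι) (l : List ι) :
    complProd P (i :: l) = (1 - P i) * complProd P l := by
  simp [complProd]

lemma complProd_append (l l' : List ι) :
    complProd P (l ++ l') = complProd P l * complProd P l' := by
  simp [complProd]

variable {P}

lemma star_complProd [StarRing R] (hP : ∀ i, IsSelfAdjoint (P i)) (l : List ι) :
    star (complProd P l) = complProd P l.reverse := by
  induction l with
  | nil => simp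
  | cons i l ih =>
    simp [complProd_cons, complProd_append, ih, (hP i).star_eq]

lemma commute_complProd {a : R} {l : List ι} (h : ∀ i ∈ l, Commute a (P i)) :
    Commute a (complProd P l) :=
  Commute.list_prod_right _ _ (by simpa using fun i hi ↦ (Commute.one_right a).sub_right (h i hi))

end ComplProd

/-- The norm of the component of `v` removed by the factor `1 - P j` when `complProd P l` is applied
to `v`; zero if `j` does not occur in `l`. -/
noncomputable def removedNorm {ι 𝕜 V : Type*} [DecidableEq ι] [RCLike 𝕜] [NormedAddCommGroup V]
    [InnerProductSpace 𝕜 V] (P : ι → V →L[𝕜] V) (v : V) : List ι → ι → ℝ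
  | [] => 0
  | i :: l => Function.update (removedNorm P v l) i ‖P i (complProd P l v)‖

section Detectability

variable {ι 𝕜 V : Type*} [RCLike 𝕜] [NormedAddCommGroup V] [InnerProductSpace 𝕜 V]
  {P : ι → V →L[𝕜] V}

lemma complProd_cons_apply (P : ι → V →L[𝕜] V) (i : ι) (l : List ι) (v : V) :
    complProd P (i :: l) v = complProd P l v - P i (complProd P l v) := by
  simp [complProd_cons]

lemma complProd_apply_of_forall_eq_zero {l : List ι} {v : V} (h : ∀ i ∈ l, P i v = 0) :
    complProd P l v = v := by
  induction l with
  | nil => simp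
  | cons i l ih =>
    rw [List.forall_mem_cons] at h
    rw [complProd_cons_apply, ih h.2, h.1, sub_zero]

lemma removedNorm_nonneg [DecidableEq ι] (v : V) (l : List ι) (j : ι) :
    0 ≤ removedNorm P v l j := by
  induction l with
  | nil => exact le_rfl
  | cons i l ih =>
    rw [removedNorm, Function.update_apply]
    split_ifs
    · exact norm_nonneg _
    · exact ih

variable [CompleteSpace V]

lemma sum_removedNorm_sq [DecidableEq ι] (hP : ∀ i, IsStarProjection (P i)) {l : List ι}
    (hl : l.Nodup) (v : V) :
    ∑ j ∈ l.toFinset, removedNorm P v l j ^ 2 = ‖v‖ ^ 2 - ‖complProd P l v‖ ^ 2 := by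
  induction l with
  | nil => simp
  | cons i l ih =>
    obtain ⟨hi, hl⟩ := List.nodup_cons.1 hl
    have hi' : i ∉ l.toFinset := by simpa using hi
    have htail : ∑ j ∈ l.toFinset, removedNorm P v (i :: l) j ^ 2 =
        ∑ j ∈ l.toFinset, removedNorm P v l j ^ 2 :=
      Finset.sum_congr rfl fun j hj ↦ by
        rw [removedNorm, Function.update_of_ne (ne_of_mem_of_not_mem hj hi')]
    rw [List.toFinset_cons, Finset.sum_insert hi', htail, ih hl, removedNorm,
      Function.update_self, complProd_cons_apply, norm_sub_map_sq (hP i)]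
    ring

open Classical in
lemma norm_apply_complProd_le (hP : ∀ i, IsStarProjection (P i)) {l : List ι} (hl : l.Nodup)
    (v : V) {i : ι} (hi : i ∈ l) :
    ‖P i (complProd P l v)‖ ≤
      ∑ j ∈ l.toFinset with ¬ Commute (P i) (P j), removedNorm P v l j := by
  induction l with
  | nil => cases hi
  | cons e l ih =>
    obtain ⟨hel, hl⟩ := List.nodup_cons.1 hl
    set u := complProd P l v with hu
    have htail : ∑ j ∈ l.toFinset with ¬ Commute (P i) (P j), removedNorm P v (e :: l) j =
        ∑ j ∈ l.toFinset with ¬ Commute (P i) (P j), removedNorm P v l j :=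
      Finset.sum_update_of_notMem (by simp [hel]) _ _
    rw [complProd_cons_apply, ← hu, List.toFinset_cons, Finset.filter_insert, map_sub]
    obtain rfl | hi := List.mem_cons.1 hi
    · rw [if_neg (by simp), htail, map_map_of_isStarProjection (hP i), sub_self, norm_zero]
      exact Finset.sum_nonneg fun j _ ↦ removedNorm_nonneg v l j
    by_cases hcomm : Commute (P i) (P e)
    · rw [if_neg (by simpa using hcomm), htail, map_map_of_commute hcomm]
      exact (norm_sub_map_le (hP e) _).trans (ih hl hi)
    · rw [if_pos hcomm, Finset.sum_insert (by simp [hel]), htail, removedNorm,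
        Function.update_self]
      calc ‖P i u - P i (P e u)‖ ≤ ‖P i u‖ + ‖P i (P e u)‖ := norm_sub_le _ _
        _ ≤ (∑ j ∈ l.toFinset with ¬ Commute (P i) (P j), removedNorm P v l j) + ‖P e u‖ :=
          add_le_add (ih hl hi) (norm_map_le_of_isStarProjection (hP i) _)
        _ = _ := add_comm _ _

-- Cauchy-Schwarz on the bound of `norm_apply_complProd_le` costs one factor `g`; the other one
-- counts how often each `removedNorm` recurs.
open Classical in
lemma sum_norm_apply_complProd_sq_le [Fintype ι] (hP : ∀ i, IsStarProjection (P i)) {g : ℕ}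
    (hg : ∀ i, Finset.card {j | ¬ Commute (P i) (P j)} ≤ g) {l : List ι} (hl : l.Nodup)
    (hmem : ∀ i, i ∈ l) (v : V) :
    ∑ i, ‖P i (complProd P l v)‖ ^ 2 ≤ (g : ℝ) ^ 2 * (‖v‖ ^ 2 - ‖complProd P l v‖ ^ 2) := by
  have huniv : l.toFinset = Finset.univ := by ext i; simp [hmem i]
  set d := removedNorm P v l
  have hsum : ∑ j, d j ^ 2 = ‖v‖ ^ 2 - ‖complProd P l v‖ ^ 2 :=
    huniv ▸ sum_removedNorm_sq hP hl v
  calc ∑ i, ‖P i (complProd P l v)‖ ^ 2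
      ≤ ∑ i, (g : ℝ) * ∑ j with ¬ Commute (P i) (P j), d j ^ 2 := by
        refine Finset.sum_le_sum fun i _ ↦ ?_
        calc ‖P i (complProd P l v)‖ ^ 2 ≤ (∑ j with ¬ Commute (P i) (P j), d j) ^ 2 := by
              gcongr
              exact huniv ▸ norm_apply_complProd_le hP hl v (hmem i)
          _ ≤ (Finset.card {j | ¬ Commute (P i) (P j)} : ℝ) *
              ∑ j with ¬ Commute (P i) (P j), d j ^ 2 := sq_sum_le_card_mul_sum_sq
          _ ≤ _ := by
              gcongr
              exact hg i
    _ = (g : ℝ) * ∑ j, (Finset.card {i | ¬ Commute (P j) (P i)} : ℝ) * d j ^ 2 := by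
        rw [← Finset.mul_sum]
        simp only [Finset.sum_filter]
        rw [Finset.sum_comm]
        simp only [← Finset.sum_filter, Finset.sum_const, nsmul_eq_mul, Commute.symm_iff]
    _ ≤ (g : ℝ) * ∑ j, (g : ℝ) * d j ^ 2 := by
        gcongr with j
        exact hg j
    _ = (g : ℝ) ^ 2 * (‖v‖ ^ 2 - ‖complProd P l v‖ ^ 2) := by
        rw [← Finset.mul_sum, hsum]
        ring

end Detectability

/-- `T` is a product of `n` layers, each of which is a product of pairwise commuting factors
`1 - P i`: a circuit of depth `n`. -/
inductive HasLayerDepth {ι R : Type*} [Ring R] (P : ι → R) : ℕ → R → Prop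
  | one : HasLayerDepth P 0 1
  | layer_mul {n : ℕ} {T : R} (l : List ι) (hl : ∀ i ∈ l, ∀ j ∈ l, Commute (P i) (P j))
      (hT : HasLayerDepth P n T) : HasLayerDepth P (n + 1) (complProd P l * T)

/-- `A n` contains every index whose projector can be affected by `n` layers acting on a vector that
is annihilated by all projectors outside `A 0`. -/
structure IsLightCone {ι R : Type*} [Ring R] (P : ι → R) (A : ℕ → Set ι) : Prop where
  mono : Monotone A
  commute : ∀ ⦃n i j⦄, i ∉ A (n + 1) → j ∈ A n → Commute (P i) (P j)

section LayerDepth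

variable {ι R : Type*} [Ring R] {P : ι → R} {n k : ℕ} {S T : R}

lemma HasLayerDepth.layer (l : List ι) (hl : ∀ i ∈ l, ∀ j ∈ l, Commute (P i) (P j)) :
    HasLayerDepth P 1 (complProd P l) := by
  simpa using HasLayerDepth.one.layer_mul l hl

lemma HasLayerDepth.mul (hS : HasLayerDepth P n S) (hT : HasLayerDepth P k T) :
    HasLayerDepth P (n + k) (S * T) := by
  induction hS with
  | one => simpa using hT
  | layer_mul l hl _ ih =>
    rw [mul_assoc, Nat.add_right_comm]
    exact ih.layer_mul l hl

lemma HasLayerDepth.pow (hT : HasLayerDepth P n T) (j : ℕ) : HasLayerDepth P (n * j) (T ^ j) := by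
  induction j with
  | zero => simpa using HasLayerDepth.one
  | succ j ih => simpa [pow_succ, Nat.mul_succ] using ih.mul hT

protected lemma HasLayerDepth.star [StarRing R] (hP : ∀ i, IsSelfAdjoint (P i))
    (hT : HasLayerDepth P n T) : HasLayerDepth P n (star T) := by
  induction hT with
  | one => simpa using HasLayerDepth.one
  | layer_mul l hl _ ih =>
    rw [star_mul, star_complProd hP]
    exact ih.mul (.layer _ (by simpa using hl))

lemma hasLayerDepth_complProd_flatten {ls : List (List ι)}
    (hls : ∀ l ∈ ls, ∀ i ∈ l, ∀ j ∈ l, Commute (P i) (P j)) :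
    HasLayerDepth P ls.length (complProd P ls.flatten) := by
  induction ls with
  | nil => exact .one
  | cons l ls ih =>
    rw [List.forall_mem_cons] at hls
    rw [List.flatten_cons, complProd_append]
    exact (ih hls.2).layer_mul l hls.1

end LayerDepth

section LightCone

variable {ι 𝕜 V : Type*} [RCLike 𝕜] [NormedAddCommGroup V] [InnerProductSpace 𝕜 V]
  {P : ι → V →L[𝕜] V} {A : ℕ → Set ι} {n : ℕ} {T : V →L[𝕜] V} {a b : V}

lemma HasLayerDepth.map_of_forall_eq_zero (hT : HasLayerDepth P n T) (ha : ∀ i, P i a = 0) :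
    T a = a := by
  induction hT with
  | one => rfl
  | layer_mul l _ _ ih =>
    rw [mul_apply_eq_comp, ih, complProd_apply_of_forall_eq_zero fun i _ ↦ ha i]

open Classical in
lemma complProd_filter_apply {s : Set ι} {l : List ι}
    (hl : ∀ i ∈ l, ∀ j ∈ l, Commute (P i) (P j)) (ha : ∀ i ∉ s, P i a = 0) :
    complProd P (l.filter (· ∈ s)) a = complProd P l a := by
  induction l with
  | nil => rfl
  | cons i l ih =>
    have htail := ih fun j hj k hk ↦ hl j (.tail _ hj) k (.tail _ hk)
    by_cases hi : i ∈ s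
    · rw [List.filter_cons_of_pos (by simpa), complProd_cons_apply, complProd_cons_apply, htail]
    · have hcomm : Commute (P i) (complProd P l) :=
        commute_complProd fun j hj ↦ hl i (.head _) j (.tail _ hj)
      rw [List.filter_cons_of_neg (by simpa), htail, complProd_cons_apply,
        map_map_of_commute hcomm, ha i hi, map_zero, sub_zero]

lemma IsLightCone.map_complProd_eq_zero (hA : IsLightCone P A) {l : List ι}
    (hl : ∀ i ∈ l, ∀ j ∈ l, Commute (P i) (P j)) (ha : ∀ i ∉ A n, P i a = 0) :
    ∀ i ∉ A (n + 1), P i (complProd P l a) = 0 := by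
  classical
  intro i hi
  rw [← complProd_filter_apply hl ha, map_map_of_commute
    (commute_complProd fun j hj ↦ hA.commute hi (of_decide_eq_true (List.mem_filter.1 hj).2)),
    ha i fun h ↦ hi (hA.mono n.le_succ h), map_zero]

lemma IsLightCone.map_eq_zero (hA : IsLightCone P A) (hT : HasLayerDepth P n T)
    (ha : ∀ i ∉ A 0, P i a = 0) : ∀ i ∉ A n, P i (T a) = 0 := by
  induction hT with
  | one => exact ha
  | layer_mul l hl _ ih => exact hA.map_complProd_eq_zero hl ih

variable [CompleteSpace V]

lemma inner_complProd_apply_eq_inner (hP : ∀ i, IsSelfAdjoint (P i)) {s : Set ι} {l : List ι}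
    (hl : ∀ i ∈ l, ∀ j ∈ l, Commute (P i) (P j)) (ha : ∀ i ∉ s, P i a = 0)
    (hb : ∀ i ∈ s, P i b = 0) : ⟪b, complProd P l a⟫_𝕜 = ⟪b, a⟫_𝕜 := by
  classical
  rw [← complProd_filter_apply hl ha, ← ContinuousLinearMap.adjoint_inner_left,
    ← ContinuousLinearMap.star_eq_adjoint, star_complProd hP, complProd_apply_of_forall_eq_zero]
  simpa using fun i _ ↦ hb i

lemma IsLightCone.inner_map_eq_inner (hA : IsLightCone P A) (hP : ∀ i, IsSelfAdjoint (P i))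
    (hT : HasLayerDepth P n T) (ha : ∀ i ∉ A 0, P i a = 0) (hb : ∀ i ∈ A n, P i b = 0) :
    ⟪b, T a⟫_𝕜 = ⟪b, a⟫_𝕜 := by
  induction hT with
  | one => rfl
  | @layer_mul n T l hl hT ih =>
    have hb' (i) (hi : i ∈ A n) : P i b = 0 := hb i (hA.mono n.le_succ hi)
    rw [mul_apply_eq_comp,
      inner_complProd_apply_eq_inner hP hl (hA.map_eq_zero hT ha) hb', ih hb']

end LightCone

/-- The vectors annihilated by the Hamiltonian `∑ i ∈ s, P i`. -/
abbrev groundSpace {ι 𝕜 V : Type*} [RCLike 𝕜] [NormedAddCommGroup V] [InnerProductSpace 𝕜 V]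
    (P : ι → V →L[𝕜] V) (s : Finset ι) : Submodule 𝕜 V :=
  ((∑ i ∈ s, P i : V →L[𝕜] V) : V →ₗ[𝕜] V).ker

section GroundSpace

variable {ι 𝕜 V : Type*} [RCLike 𝕜] [NormedAddCommGroup V] [InnerProductSpace 𝕜 V]

lemma starProjection_mem_orthogonal_of_le {U W : Submodule 𝕜 V} [U.HasOrthogonalProjection]
    (hWU : W ≤ U) {v : V} (hv : v ∈ Wᗮ) : U.starProjection v ∈ Wᗮ := by
  rw [Submodule.mem_orthogonal] at hv ⊢
  intro w hw
  rw [← Submodule.inner_starProjection_left_eq_right,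
    Submodule.starProjection_eq_self_iff.2 (hWU hw)]
  exact hv w hw

variable [CompleteSpace V] {P : ι → V →L[𝕜] V}

lemma mem_groundSpace_iff (hP : ∀ i, IsStarProjection (P i)) {s : Finset ι} {v : V} :
    v ∈ groundSpace P s ↔ ∀ i ∈ s, P i v = 0 :=
  sum_map_eq_zero_iff hP s v

lemma groundSpace_anti (hP : ∀ i, IsStarProjection (P i)) {s t : Finset ι} (hst : s ⊆ t) :
    groundSpace P t ≤ groundSpace P s := fun v hv ↦ by
  rw [mem_groundSpace_iff hP] at hv ⊢
  exact fun i hi ↦ hv i (hst hi)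

lemma HasLayerDepth.map_mem_orthogonal_groundSpace [Fintype ι] {n : ℕ} {T : V →L[𝕜] V}
    (hT : HasLayerDepth P n T) (hP : ∀ i, IsStarProjection (P i)) {w : V}
    (hw : w ∈ (groundSpace P Finset.univ)ᗮ) : T w ∈ (groundSpace P Finset.univ)ᗮ := by
  rw [Submodule.mem_orthogonal] at hw ⊢
  intro u hu
  have hfix : star T u = u := (hT.star fun i ↦ (hP i).isSelfAdjoint).map_of_forall_eq_zero
    fun i ↦ (mem_groundSpace_iff hP).1 hu i (Finset.mem_univ i)
  rw [← ContinuousLinearMap.adjoint_inner_left, ← ContinuousLinearMap.star_eq_adjoint, hfix]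
  exact hw u hu

end GroundSpace

section Overlap

open Polynomial

lemma inner_aeval_apply_eq_inner {V : Type*} [NormedAddCommGroup V] [InnerProductSpace ℂ V]
    {S : V →L[ℂ] V} {p : ℝ[X]} (hp : p.eval 1 = 1) {a b : V}
    (h : ∀ j ≤ p.natDegree, ⟪b, (S ^ j) a⟫_ℂ = ⟪b, a⟫_ℂ) :
    ⟪b, aeval S p a⟫_ℂ = ⟪b, a⟫_ℂ := by
  have hcoeff : ∑ j ∈ Finset.range (p.natDegree + 1), p.coeff j = 1 := by
    simpa [eval_eq_sum_range] using hp
  calc ⟪b, aeval S p a⟫_ℂ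
      = ∑ j ∈ Finset.range (p.natDegree + 1), (p.coeff j : ℂ) * ⟪b, (S ^ j) a⟫_ℂ := by
        rw [aeval_eq_sum_range, sum_apply, inner_sum]
        refine Finset.sum_congr rfl fun j _ ↦ ?_
        rw [smul_apply, ← Complex.coe_smul, inner_smul_right]
    _ = ∑ j ∈ Finset.range (p.natDegree + 1), (p.coeff j : ℂ) * ⟪b, a⟫_ℂ :=
        Finset.sum_congr rfl fun j hj ↦ by
          rw [h j (Nat.lt_succ_iff.1 (Finset.mem_range.1 hj))]
    _ = ⟪b, a⟫_ℂ := by rw [← Finset.sum_mul, ← Complex.ofReal_sum, hcoeff]; simp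

variable {ι V : Type*} [Fintype ι] [NormedAddCommGroup V] [InnerProductSpace ℂ V]
  [CompleteSpace V] {P : ι → V →L[ℂ] V}

lemma star_mul_self_pow_apply_of_mem_orthogonal {n : ℕ} {T : V →L[ℂ] V}
    (hT : HasLayerDepth P n T) (hP : ∀ i, IsStarProjection (P i)) {a : V}
    (ha : a ∈ (groundSpace P Finset.univ)ᗮ) (j : ℕ) :
    ((star (T * (groundSpace P Finset.univ)ᗮ.starProjection) *
      (T * (groundSpace P Finset.univ)ᗮ.starProjection)) ^ j) a = ((star T * T) ^ j) a := by
  have hTT := (hT.star fun i ↦ (hP i).isSelfAdjoint).mul hT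
  induction j with
  | zero => rfl
  | succ j ih =>
    have hmem := (hTT.pow j).map_mem_orthogonal_groundSpace hP ha
    rw [pow_succ', pow_succ', mul_apply_eq_comp, ih, star_mul,
      (isStarProjection_starProjection (U := (groundSpace P Finset.univ)ᗮ)).isSelfAdjoint.star_eq]
    simp only [mul_apply_eq_comp]
    rw [Submodule.starProjection_eq_self_iff.2 hmem, Submodule.starProjection_eq_self_iff]
    exact hTT.map_mem_orthogonal_groundSpace hP hmem

lemma norm_inner_le_of_isLightCone {n m : ℕ} {T : V →L[ℂ] V} (hT : HasLayerDepth P n T)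
    (hP : ∀ i, IsStarProjection (P i)) {A : ℕ → Set ι} (hA : IsLightCone P A) {lam : ℝ}
    (h1 : lam ≤ 1) (hnorm : ‖T * (groundSpace P Finset.univ)ᗮ.starProjection‖ ^ 2 ≤ lam)
    (hm : 0 < m) {a b : V} (ha : ∀ i ∉ A 0, P i a = 0) (hb : ∀ i ∈ A ((n + n) * m), P i b = 0)
    (ha' : a ∈ (groundSpace P Finset.univ)ᗮ) :
    ‖⟪b, a⟫_ℂ‖ ≤ lam / (lam + 2 * m ^ 2 * (1 - lam)) * (‖b‖ * ‖a‖) := by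
  obtain ⟨p, hdeg, hp1, hp⟩ :=
    exists_polynomial_eval_one_abs_eval_le ((sq_nonneg _).trans hnorm) h1 hm
  set δ := lam / (lam + 2 * m ^ 2 * (1 - lam))
  set B := T * (groundSpace P Finset.univ)ᗮ.starProjection with hB
  have hcircuit (j : ℕ) (hj : j ≤ p.natDegree) : ⟪b, ((star B * B) ^ j) a⟫_ℂ = ⟪b, a⟫_ℂ := by
    rw [hB, star_mul_self_pow_apply_of_mem_orthogonal hT hP ha' j]
    have hsa (i) := (hP i).isSelfAdjoint
    exact hA.inner_map_eq_inner hsa (((hT.star hsa).mul hT).pow j) ha fun i hi ↦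
      hb i (hA.mono (Nat.mul_le_mul_left _ (hj.trans hdeg)) hi)
  calc ‖⟪b, a⟫_ℂ‖ = ‖⟪b, aeval (star B * B) p a⟫_ℂ‖ := by
        rw [inner_aeval_apply_eq_inner hp1 hcircuit]
    _ ≤ ‖b‖ * ‖aeval (star B * B) p a‖ := norm_inner_le_norm _ _
    _ ≤ ‖b‖ * (‖aeval (star B * B) p‖ * ‖a‖) := by
        gcongr
        exact ContinuousLinearMap.le_opNorm _ _
    _ ≤ ‖b‖ * (δ * ‖a‖) := by
        gcongr
        exact norm_aeval_star_mul_self_le hnorm hp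
    _ = δ * (‖b‖ * ‖a‖) := by ring

end Overlap

section TwoProjections

variable {𝕜 V : Type*} [RCLike 𝕜] [NormedAddCommGroup V] [InnerProductSpace 𝕜 V]

lemma norm_starProjection_sq_add_le {U W : Submodule 𝕜 V} [U.HasOrthogonalProjection]
    [W.HasOrthogonalProjection] {v : V} {δ : ℝ} (hδ : 0 ≤ δ)
    (h : ‖⟪W.starProjection v, U.starProjection v⟫_𝕜‖ ≤
      δ * (‖W.starProjection v‖ * ‖U.starProjection v‖)) :
    ‖U.starProjection v‖ ^ 2 + ‖W.starProjection v‖ ^ 2 ≤ (1 + δ) * ‖v‖ ^ 2 := by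
  set a := U.starProjection v
  set b := W.starProjection v
  set s := ‖a‖ ^ 2 + ‖b‖ ^ 2 with hs
  have hcross : RCLike.re ⟪b, a⟫_𝕜 ≤ δ * (‖b‖ * ‖a‖) := (RCLike.re_le_norm _).trans h
  have hsum : ‖b + a‖ ^ 2 ≤ (1 + δ) * s := by
    rw [norm_add_sq (𝕜 := 𝕜)]
    nlinarith [mul_nonneg hδ (sq_nonneg (‖b‖ - ‖a‖))]
  have hinner : RCLike.re ⟪b + a, v⟫_𝕜 = s := by
    rw [inner_add_left, map_add, Submodule.re_inner_starProjection_eq_normSq,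
      Submodule.re_inner_starProjection_eq_normSq, hs, add_comm]
    rfl
  have hcs : s ^ 2 ≤ (1 + δ) * s * ‖v‖ ^ 2 := by
    calc s ^ 2 ≤ (‖b + a‖ * ‖v‖) ^ 2 := by
          rw [← hinner]
          exact pow_le_pow_left₀ (hinner ▸ by positivity) (re_inner_le_norm _ _) 2
      _ = ‖b + a‖ ^ 2 * ‖v‖ ^ 2 := mul_pow _ _ _
      _ ≤ (1 + δ) * s * ‖v‖ ^ 2 := by gcongr
  obtain hs0 | hs0 := (show 0 ≤ s by positivity).eq_or_lt
  · rw [← hs0]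
    positivity
  · exact le_of_mul_le_mul_right (by linarith) hs0

lemma one_sub_mul_le_norm_sub_starProjection_sq_add {U W : Submodule 𝕜 V}
    [U.HasOrthogonalProjection] [W.HasOrthogonalProjection] {v : V} {δ : ℝ} (hδ : 0 ≤ δ)
    (h : ‖⟪W.starProjection v, U.starProjection v⟫_𝕜‖ ≤
      δ * (‖W.starProjection v‖ * ‖U.starProjection v‖)) :
    (1 - δ) * ‖v‖ ^ 2 ≤ ‖Uᗮ.starProjection v‖ ^ 2 + ‖Wᗮ.starProjection v‖ ^ 2 := by
  have hU := Submodule.norm_sq_eq_add_norm_sq_starProjection v U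
  have hW := Submodule.norm_sq_eq_add_norm_sq_starProjection v W
  linarith [norm_starProjection_sq_add_le hδ h]

end TwoProjections

section GapAmplification

variable {ι V : Type*} [Fintype ι] [NormedAddCommGroup V] [InnerProductSpace ℂ V]
  [FiniteDimensional ℂ V] {P : ι → V →L[ℂ] V}

open Classical in
lemma mul_norm_complProd_apply_sq_le (hP : ∀ i, IsStarProjection (P i)) {g : ℕ}
    (hg : ∀ i, Finset.card {j | ¬ Commute (P i) (P j)} ≤ g) {l : List ι} (hl : l.Nodup)
    (hmem : ∀ i, i ∈ l) {γ : ℝ} (hgap : HasSpectralGap (∑ i, P i) γ) {w : V}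
    (hw : complProd P l w ∈ (groundSpace P Finset.univ)ᗮ) :
    ((g : ℝ) ^ 2 + γ) * ‖complProd P l w‖ ^ 2 ≤ (g : ℝ) ^ 2 * ‖w‖ ^ 2 := by
  have henergy := hgap.mul_norm_sq_le (isPositive_sum_of_isStarProjection hP _) hw
  rw [re_inner_sum_map_self hP] at henergy
  linarith [sum_norm_apply_complProd_sq_le hP hg hl hmem w]

lemma norm_mul_starProjection_sq_le {K : Submodule ℂ V} {T : V →L[ℂ] V} {c d : ℝ} (hc : 0 < c)
    (h : ∀ w ∈ K, c * ‖T w‖ ^ 2 ≤ d * ‖w‖ ^ 2) (hd : 0 ≤ d) :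
    ‖T * K.starProjection‖ ^ 2 ≤ d / c := by
  rw [← Real.sqrt_le_sqrt_iff (by positivity), Real.sqrt_sq (norm_nonneg _)]
  refine ContinuousLinearMap.opNorm_le_bound _ (Real.sqrt_nonneg _) fun v ↦ ?_
  rw [← sq_le_sq₀ (norm_nonneg _) (by positivity), mul_pow, Real.sq_sqrt (by positivity),
    div_mul_eq_mul_div, le_div_iff₀ hc, mul_comm]
  calc c * ‖T (K.starProjection v)‖ ^ 2 ≤ d * ‖K.starProjection v‖ ^ 2 :=
        h _ (K.starProjection_apply_mem v)
    _ ≤ d * ‖v‖ ^ 2 := by gcongr; exact K.norm_starProjection_apply_le v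

lemma mul_norm_starProjection_orthogonal_groundSpace_sq_le (hP : ∀ i, IsStarProjection (P i))
    {s : Finset ι} {c : ℝ} (hgap : HasSpectralGap (∑ i ∈ s, P i) c) (v : V) :
    c * ‖(groundSpace P s)ᗮ.starProjection v‖ ^ 2 ≤ RCLike.re ⟪v, (∑ i, P i) v⟫_ℂ := by
  have hker (i) (hi : i ∈ s) : P i ((groundSpace P s).starProjection v) = 0 :=
    (mem_groundSpace_iff hP).1 (Submodule.starProjection_apply_mem _ v) i hi
  have hsub : (groundSpace P s)ᗮ.starProjection v = v - (groundSpace P s).starProjection v := by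
    simp [Submodule.starProjection_orthogonal]
  calc c * ‖(groundSpace P s)ᗮ.starProjection v‖ ^ 2
      ≤ ∑ i ∈ s, ‖P i ((groundSpace P s)ᗮ.starProjection v)‖ ^ 2 := by
        rw [← re_inner_sum_map_self hP]
        exact hgap.mul_norm_sq_le (isPositive_sum_of_isStarProjection hP s)
          (Submodule.starProjection_apply_mem _ v)
    _ = ∑ i ∈ s, ‖P i v‖ ^ 2 :=
        Finset.sum_congr rfl fun i hi ↦ by rw [hsub, map_sub, hker i hi, sub_zero]
    _ ≤ ∑ i, ‖P i v‖ ^ 2 :=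
        Finset.sum_le_sum_of_subset_of_nonneg (Finset.subset_univ s) fun _ _ _ ↦ sq_nonneg _
    _ = RCLike.re ⟪v, (∑ i, P i) v⟫_ℂ := (re_inner_sum_map_self hP _ v).symm

lemma mem_orthogonal_groundSpace_of_eigenvector (hP : ∀ i, IsStarProjection (P i)) {γ : ℝ}
    (hγ : γ ≠ 0) {v : V} (hv : (∑ i, P i) v = (γ : ℂ) • v) :
    v ∈ (groundSpace P Finset.univ)ᗮ := by
  refine (Submodule.mem_orthogonal _ v).2 fun u hu ↦ ?_
  have hH := (isPositive_sum_of_isStarProjection hP Finset.univ).inner_left_eq_inner_right u v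
  rw [show (∑ i, P i) u = 0 from hu, inner_zero_left, hv, inner_smul_right] at hH
  exact (mul_eq_zero.1 hH.symm).resolve_left (Complex.ofReal_ne_zero.2 hγ)

open Classical in
lemma norm_inner_le_of_eigenvalue_gap (hP : ∀ i, IsStarProjection (P i)) {g m : ℕ}
    (hg : ∀ i, Finset.card {j | ¬ Commute (P i) (P j)} ≤ g) (hm : 0 < m)
    {ls : List (List ι)} (hnodup : ls.flatten.Nodup) (hmem : ∀ i, i ∈ ls.flatten)
    (hls : ∀ l ∈ ls, ∀ i ∈ l, ∀ j ∈ l, Commute (P i) (P j)) {A : ℕ → Set ι}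
    (hA : IsLightCone P A) {γ : ℝ} (hγ : 0 < γ) (hgap : HasSpectralGap (∑ i, P i) γ) {a b : V}
    (ha : ∀ i ∉ A 0, P i a = 0) (hb : ∀ i ∈ A (2 * ls.length * m), P i b = 0)
    (ha' : a ∈ (groundSpace P Finset.univ)ᗮ) :
    ‖⟪b, a⟫_ℂ‖ ≤ (g : ℝ) ^ 2 / (g ^ 2 + 2 * m ^ 2 * γ) * (‖b‖ * ‖a‖) := by
  have hT := hasLayerDepth_complProd_flatten hls
  have hnorm : ‖complProd P ls.flatten * (groundSpace P Finset.univ)ᗮ.starProjection‖ ^ 2 ≤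
      (g : ℝ) ^ 2 / (g ^ 2 + γ) :=
    norm_mul_starProjection_sq_le (by positivity) (fun w hw ↦ mul_norm_complProd_apply_sq_le hP hg
      hnodup hmem hgap (hT.map_mem_orthogonal_groundSpace hP hw)) (by positivity)
  have hlam : (g : ℝ) ^ 2 / (g ^ 2 + γ) ≤ 1 := div_le_one_of_le₀ (by linarith) (by positivity)
  have hdenom : (g : ℝ) ^ 2 / (g ^ 2 + γ) + 2 * m ^ 2 * (1 - (g : ℝ) ^ 2 / (g ^ 2 + γ)) =
      (g ^ 2 + 2 * m ^ 2 * γ) / (g ^ 2 + γ) := by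
    field_simp
    ring
  have hoverlap :=
    norm_inner_le_of_isLightCone hT hP hA hlam hnorm hm ha (two_mul ls.length ▸ hb) ha'
  rwa [hdenom, div_div_div_cancel_right₀ (by positivity)] at hoverlap

lemma le_two_mul_add_div_sq {c γ g : ℝ} {m : ℕ} (hγ : 0 < γ) (hm : 0 < m)
    (h : c * (1 - g ^ 2 / (g ^ 2 + 2 * m ^ 2 * γ)) ≤ 2 * γ) : c ≤ 2 * γ + g ^ 2 / m ^ 2 := by
  have hone_sub : 1 - g ^ 2 / (g ^ 2 + 2 * m ^ 2 * γ) =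
      2 * m ^ 2 * γ / (g ^ 2 + 2 * m ^ 2 * γ) := by
    field_simp
    ring
  rw [hone_sub, ← mul_div_assoc, div_le_iff₀ (by positivity)] at h
  have hm' : (0 : ℝ) < m ^ 2 := by positivity
  have hcm : c * m ^ 2 ≤ g ^ 2 + 2 * m ^ 2 * γ :=
    le_of_mul_le_mul_left (by linarith) (show 0 < 2 * γ by positivity)
  calc c ≤ (g ^ 2 + 2 * m ^ 2 * γ) / m ^ 2 := (le_div_iff₀ hm').2 hcm
    _ = 2 * γ + g ^ 2 / m ^ 2 := by
      field_simp
      ring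

open Classical in
theorem le_two_mul_minNonzeroEig_add (hP : ∀ i, IsStarProjection (P i)) {g m : ℕ}
    (hg : ∀ i, Finset.card {j | ¬ Commute (P i) (P j)} ≤ g) (hm : 0 < m)
    {ls : List (List ι)} (hnodup : ls.flatten.Nodup) (hmem : ∀ i, i ∈ ls.flatten)
    (hls : ∀ l ∈ ls, ∀ i ∈ l, ∀ j ∈ l, Commute (P i) (P j)) {A : ℕ → Set ι}
    (hA : IsLightCone P A) {X₁ X₂ : Finset ι} (hX₁ : ∀ i ∉ A 0, i ∈ X₁)
    (hX₂ : ∀ i ∈ A (2 * ls.length * m), i ∈ X₂) {c : ℝ} (hc : 0 ≤ c)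
    (hgap₁ : HasSpectralGap (∑ i ∈ X₁, P i) c) (hgap₂ : HasSpectralGap (∑ i ∈ X₂, P i) c)
    (hne : ∑ i, P i ≠ 0) : c ≤ 2 * minNonzeroEig (∑ i, P i) + (g : ℝ) ^ 2 / m ^ 2 := by
  have hpos := isPositive_sum_of_isStarProjection hP Finset.univ
  obtain ⟨hγ, v, hv0, hv⟩ := minNonzeroEig_mem hpos hne
  have hgap := hasSpectralGap_minNonzeroEig hpos
  set γ := minNonzeroEig (∑ i, P i)
  set U := groundSpace P X₁
  set W := groundSpace P X₂
  set δ := (g : ℝ) ^ 2 / (g ^ 2 + 2 * m ^ 2 * γ)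
  have hU (i) (hi : i ∈ X₁) : P i (U.starProjection v) = 0 :=
    (mem_groundSpace_iff hP).1 (U.starProjection_apply_mem v) i hi
  have hW (i) (hi : i ∈ X₂) : P i (W.starProjection v) = 0 :=
    (mem_groundSpace_iff hP).1 (W.starProjection_apply_mem v) i hi
  have horth : U.starProjection v ∈ (groundSpace P Finset.univ)ᗮ :=
    starProjection_mem_orthogonal_of_le (groundSpace_anti hP (Finset.subset_univ X₁))
      (mem_orthogonal_groundSpace_of_eigenvector hP hγ.ne' hv)
  have hexcited := one_sub_mul_le_norm_sub_starProjection_sq_add (by positivity)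
    (norm_inner_le_of_eigenvalue_gap hP hg hm hnodup hmem hls hA hγ hgap
      (fun i hi ↦ hU i (hX₁ i hi)) (fun i hi ↦ hW i (hX₂ i hi)) horth)
  have henergy : RCLike.re ⟪v, (∑ i, P i) v⟫_ℂ = γ * ‖v‖ ^ 2 := by
    rw [hv, inner_smul_right, ← inner_self_eq_norm_sq (𝕜 := ℂ)]
    exact RCLike.re_ofReal_mul γ _
  have h₁ := mul_norm_starProjection_orthogonal_groundSpace_sq_le hP hgap₁ v
  have h₂ := mul_norm_starProjection_orthogonal_groundSpace_sq_le hP hgap₂ v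
  rw [henergy] at h₁ h₂
  have hcδ : c * (1 - δ) ≤ 2 * γ := by
    refine le_of_mul_le_mul_right ?_ (show 0 < ‖v‖ ^ 2 by positivity)
    linarith [mul_le_mul_of_nonneg_left hexcited hc]
  exact le_two_mul_add_div_sq hγ hm hcδ

end GapAmplification

section Windows

/-- `IsWindowCover n t M k α`: the windows `[α i, α i + t)` with `i ≤ k` cover `[0, n)`, consecutive
windows share more than `M` sites, and windows whose indices differ by at least two are disjoint. -/
structure IsWindowCover (n t M k : ℕ) (α : ℕ → ℕ) : Prop where
  monotone : Monotone α
  start_zero : α 0 = 0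
  end_last : α k + t = n
  overlap : ∀ i, α (i + 1) + M + 1 ≤ α i + t
  separated : ∀ ⦃i j⦄, i + 2 ≤ j → α i + t ≤ α j

/-- Both sites `y` and `y + 1` lie in the window `[a, a + t)`. -/
def InWindow (t a y : ℕ) : Prop := a ≤ y ∧ y + 2 ≤ a + t

-- The windows start at the multiples of `(n - t) / k`, rounded down, where `k = 2 (n - t) / t`
-- makes this spacing slightly larger than `t / 2`.
lemma exists_isWindowCover {n t M : ℕ} (ht : 4 * (M + 1) ≤ t) (hn : 5 * t ≤ 2 * n) :
    ∃ k α, IsWindowCover n t M k α := by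
  obtain ⟨w, rfl⟩ : ∃ w, n = w + t := ⟨n - t, by omega⟩
  obtain ⟨d, rfl⟩ : ∃ d, t = d + (M + 1) := ⟨t - (M + 1), by omega⟩
  set t := d + (M + 1)
  set k := 2 * w / t
  have ht0 : 0 < t := by omega
  have hk : 0 < k := Nat.div_pos (by omega) ht0
  have hkt : k * t ≤ 2 * w := Nat.div_mul_le_self _ _
  have hkt' : 2 * w < t * (k + 1) := Nat.lt_mul_div_succ _ ht0
  have hwd : w ≤ k * d := by linarith [Nat.mul_le_mul_left k (show 3 * t ≤ 4 * d by omega)]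
  have hmono : Monotone fun i ↦ i * w / k := fun i j hij ↦
    Nat.div_le_div_right (Nat.mul_le_mul_right _ hij)
  refine ⟨k, fun i ↦ i * w / k, hmono, by simp, ?_, fun i ↦ ?_, fun i j hij ↦ ?_⟩
  · simp only [Nat.mul_div_cancel_left _ hk]
  · have hspacing : (i + 1) * w / k ≤ i * w / k + d := by
      rw [← Nat.add_mul_div_left _ _ hk]
      exact Nat.div_le_div_right (by linarith)
    omega
  · calc i * w / k + t = (i * w + k * t) / k := (Nat.add_mul_div_left _ _ hk).symm
      _ ≤ (i + 2) * w / k := Nat.div_le_div_right (by linarith)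
      _ ≤ j * w / k := hmono hij

namespace IsWindowCover

variable {n t M k : ℕ} {α : ℕ → ℕ}

lemma end_le (h : IsWindowCover n t M k α) {i : ℕ} (hi : i ≤ k) : α i + t ≤ n := by
  have := h.monotone hi
  have := h.end_last
  omega

lemma exists_inWindow (h : IsWindowCover n t M k α) {y : ℕ} (hy : y + 2 ≤ n) :
    ∃ i ≤ k, InWindow t (α i) y := by
  set i := Nat.findGreatest (fun i ↦ α i ≤ y) k
  have hik : i ≤ k := Nat.findGreatest_le k
  have hstart : α i ≤ y :=
    Nat.findGreatest_spec (P := fun i ↦ α i ≤ y) (Nat.zero_le k) (by simp [h.start_zero])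
  refine ⟨i, hik, hstart, ?_⟩
  obtain hik | hik := hik.eq_or_lt
  · rwa [hik, h.end_last]
  · have := Nat.findGreatest_is_greatest (P := fun i ↦ α i ≤ y) (Nat.lt_add_one i) hik
    have := h.overlap i
    omega

lemma exists_odd_inWindow (h : IsWindowCover n t M k α) {y z : ℕ} (hy : y + 2 ≤ n)
    (hz : z + 2 ≤ n) (heven : ∀ i ≤ k, Even i → ¬ InWindow t (α i) y) (hzy : z ≤ y + M)
    (hyz : y ≤ z + M) : ∃ i ≤ k, Odd i ∧ InWindow t (α i) z := by
  obtain ⟨i, hik, hstart, hend⟩ := h.exists_inWindow hy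
  have hodd : Odd i := Nat.not_even_iff_odd.1 fun hi ↦ heven i hik hi ⟨hstart, hend⟩
  refine ⟨i, hik, hodd, ?_, ?_⟩
  · obtain ⟨r, rfl⟩ := hodd
    have hprev := heven (2 * r) (by omega) (even_two_mul r)
    have := h.overlap (2 * r)
    have := h.monotone (Nat.le_add_right (2 * r) 1)
    unfold InWindow at hprev
    omega
  · obtain rfl | hik := hik.eq_or_lt
    · rwa [h.end_last]
    · have hnext := heven (i + 1) hik hodd.add_one
      have := h.overlap i
      have := h.monotone (Nat.le_add_right i 1)
      unfold InWindow at hnext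
      omega

end IsWindowCover

end Windows

section WindowGap

variable {ι : Type*}

lemma exists_list_of_layers [Finite ι] {L : ℕ} (layer : ι → Fin L) :
    ∃ ls : List (List ι), ls.length = L ∧ ls.flatten.Nodup ∧ (∀ i, i ∈ ls.flatten) ∧
      ∀ l ∈ ls, ∀ i ∈ l, ∀ j ∈ l, layer i = layer j := by
  classical
  cases nonempty_fintype ι
  refine ⟨(List.finRange L).map fun k ↦ (Finset.univ.filter (layer · = k)).toList, by simp, ?_,
    by simp, by simp +contextual⟩
  refine List.nodup_flatten.2 ⟨by simp [Finset.nodup_toList], ?_⟩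
  refine List.pairwise_map.2 ((List.nodup_finRange L).imp fun hkl ↦ ?_)
  exact List.disjoint_left.2 fun i hk hl ↦ hkl (by simp_all)

lemma isLightCone_thickening {R : Type*} [Ring R] {P : ι → R} {x : ι → ℕ}
    (hx : ∀ i j, x i + 1 < x j → Commute (P i) (P j)) (Y : Set ι) :
    IsLightCone P fun n ↦ {i | ∃ j ∈ Y, x i ≤ x j + n ∧ x j ≤ x i + n} where
  mono m n hmn := by
    rintro i ⟨j, hj, hij, hji⟩
    exact ⟨j, hj, by omega, by omega⟩
  commute := by
    rintro n i j hi ⟨y, hy, hjy, hyj⟩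
    have hfar : x i + 1 < x j ∨ x j + 1 < x i := by
      by_contra! hnear
      exact hi ⟨y, hy, by omega, by omega⟩
    exact hfar.elim (hx i j) fun h ↦ (hx j i h).symm

lemma exists_lightCone_depth {L t : ℕ} (hL : 0 < L) (ht : 64 * L < t) :
    ∃ m, 0 < m ∧ 4 * (2 * L * m + 1) ≤ t ∧ t ≤ 20 * L * m := by
  have hle : 16 * L * (t / (16 * L)) ≤ t := Nat.mul_div_le _ _
  have hlt : t < 16 * L * (t / (16 * L) + 1) := Nat.lt_mul_div_succ _ (by positivity)
  have hfour : 4 ≤ t / (16 * L) := (Nat.le_div_iff_mul_le (by positivity)).2 (by linarith)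
  exact ⟨t / (16 * L), by omega, by linarith, by linarith [Nat.mul_le_mul_left L hfour]⟩

lemma sq_div_sq_le_of_le_mul {g m t b : ℝ} (hm : 0 < m) (ht : 0 < t) (h : t ≤ b * m) :
    g ^ 2 / m ^ 2 ≤ b ^ 2 * g ^ 2 / t ^ 2 := by
  rw [div_le_div_iff₀ (by positivity) (by positivity)]
  calc g ^ 2 * t ^ 2 ≤ g ^ 2 * (b * m) ^ 2 := by gcongr
    _ = b ^ 2 * g ^ 2 * m ^ 2 := by ring

variable {V : Type*} [NormedAddCommGroup V] [InnerProductSpace ℂ V] [FiniteDimensional ℂ V]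
  {P : ι → V →L[ℂ] V}

lemma hasSpectralGap_sum_biUnion [DecidableEq ι] (hP : ∀ i, IsStarProjection (P i)) {κ : Type*}
    {s : Finset κ} {B : κ → Finset ι} {c : ℝ} (hdisj : (s : Set κ).PairwiseDisjoint B)
    (hcomm : (s : Set κ).Pairwise fun k l ↦ ∀ i ∈ B k, ∀ j ∈ B l, Commute (P i) (P j))
    (hgap : ∀ k ∈ s, HasSpectralGap (∑ i ∈ B k, P i) c) :
    HasSpectralGap (∑ i ∈ s.biUnion B, P i) c := by
  rw [Finset.sum_biUnion hdisj]
  exact .sum (fun k _ ↦ isPositive_sum_of_isStarProjection hP (B k))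
    (hcomm.mono' fun _ _ h ↦ .sum_left _ _ _ fun i hi ↦ .sum_right _ _ _ (h i hi)) hgap

open Classical in
lemma hasSpectralGap_sum_windows [Fintype ι] (hP : ∀ i, IsStarProjection (P i)) {x : ι → ℕ}
    (hx : ∀ i j, x i + 1 < x j → Commute (P i) (P j)) {t : ℕ} {α : ℕ → ℕ} {s : Finset ℕ}
    (hsep : ∀ k ∈ s, ∀ l ∈ s, k < l → α k + t ≤ α l) {c : ℝ}
    (hgap : ∀ k ∈ s, c ≤ minNonzeroEig (∑ i with InWindow t (α k) (x i), P i)) :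
    HasSpectralGap (∑ i ∈ s.biUnion fun k ↦ {i | InWindow t (α k) (x i)}, P i) c := by
  have hfar {k l} (hk : k ∈ s) (hl : l ∈ s) (hkl : k ≠ l) {i j : ι} (hi : InWindow t (α k) (x i))
      (hj : InWindow t (α l) (x j)) : x i + 1 < x j ∨ x j + 1 < x i := by
    unfold InWindow at hi hj
    obtain h | h := hkl.lt_or_gt
    · have := hsep k hk l hl h
      omega
    · have := hsep l hl k hk h
      omega
  refine hasSpectralGap_sum_biUnion hP (fun k hk l hl hkl ↦ ?_) (fun k hk l hl hkl i hi j hj ↦ ?_)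
    fun k hk ↦ ?_
  · refine Finset.disjoint_left.2 fun i hi hi' ↦ ?_
    have := hfar hk hl hkl (Finset.mem_filter.1 hi).2 (Finset.mem_filter.1 hi').2
    omega
  · exact (hfar hk hl hkl (Finset.mem_filter.1 hi).2 (Finset.mem_filter.1 hj).2).elim (hx i j)
      fun h ↦ (hx j i h).symm
  · have hpos := isPositive_sum_of_isStarProjection hP {i | InWindow t (α k) (x i)}
    exact (hasSpectralGap_minNonzeroEig hpos).mono hpos (hgap k hk)

open Classical in
theorem le_two_mul_minNonzeroEig_add_of_windows [Fintype ι] (hP : ∀ i, IsStarProjection (P i))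
    {g : ℕ} (hg : ∀ i, Finset.card {j | ¬ Commute (P i) (P j)} ≤ g)
    {L : ℕ} (layer : ι → Fin L) (hlayer : ∀ i j, layer i = layer j → Commute (P i) (P j))
    {x : ι → ℕ} (hx : ∀ i j, x i + 1 < x j → Commute (P i) (P j))
    {n t : ℕ} (hxn : ∀ i, x i + 2 ≤ n) (htL : 64 * L < t) (htn : 5 * t ≤ 2 * n)
    {c : ℝ} (hc : 0 ≤ c)
    (hgap : ∀ a, a + t ≤ n → c ≤ minNonzeroEig (∑ i with InWindow t a (x i), P i)) :
    c ≤ 2 * minNonzeroEig (∑ i, P i) + 400 * L ^ 2 * g ^ 2 / t ^ 2 := by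
  by_cases hne : ∑ i, P i = 0
  · have hP0 (i) : P i = 0 := ContinuousLinearMap.ext fun v ↦
      (sum_map_eq_zero_iff hP Finset.univ v).1 (by rw [hne, zero_apply]) i (Finset.mem_univ i)
    have hc0 := hgap 0 (by omega)
    simp only [hP0, Finset.sum_const_zero, minNonzeroEig_zero] at hc0 ⊢
    exact hc0.trans (by positivity)
  obtain ⟨i₀, -⟩ := Finset.exists_ne_zero_of_sum_ne_zero hne
  obtain ⟨m, hm, hmt, htm⟩ := exists_lightCone_depth (layer i₀).pos htL
  obtain ⟨ls, hlength, hnodup, hmem, hls⟩ := exists_list_of_layers layer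
  obtain ⟨k, α, hα⟩ := exists_isWindowCover hmt htn
  let X (p : ℕ → Prop) : Finset ι :=
    {k ∈ Finset.range (k + 1) | p k}.biUnion fun k ↦ {i | InWindow t (α k) (x i)}
  have mem_X {p i} : i ∈ X p ↔ ∃ j ≤ k, p j ∧ InWindow t (α j) (x i) := by
    simp [X, and_assoc]
  have hgapX {p : ℕ → Prop} (hp : ∀ i j, p i → p j → i < j → i + 2 ≤ j) :
      HasSpectralGap (∑ i ∈ X p, P i) c := by
    refine hasSpectralGap_sum_windows hP hx (fun i hi j hj hij ↦ ?_) fun i hi ↦ ?_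
    · exact hα.separated (hp i j (Finset.mem_filter.1 hi).2 (Finset.mem_filter.1 hj).2 hij)
    · exact hgap _ (hα.end_le (Finset.mem_range_succ_iff.1 (Finset.mem_filter.1 hi).1))
  have hcone := isLightCone_thickening hx {i | i ∉ X Even}
  have hbound := le_two_mul_minNonzeroEig_add hP hg hm hnodup hmem
    (fun l hl i hi j hj ↦ hlayer i j (hls l hl i hi j hj)) hcone
    (X₁ := X Even) (X₂ := X Odd) (fun i hi ↦ by_contra fun hiX ↦ hi ⟨i, hiX, by simp⟩)
    (fun i ⟨j, hj, hij, hji⟩ ↦ mem_X.2 <| hα.exists_odd_inWindow (hxn j) (hxn i)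
      (fun l hl hlp hlw ↦ hj (mem_X.2 ⟨l, hl, hlp, hlw⟩)) (hlength ▸ hij) (hlength ▸ hji))
    hc (hgapX (by rintro i j ⟨p, rfl⟩ ⟨q, rfl⟩ h; omega))
    (hgapX (by rintro i j ⟨p, rfl⟩ ⟨q, rfl⟩ h; omega)) hne
  have herror : (g : ℝ) ^ 2 / m ^ 2 ≤ (20 * L) ^ 2 * g ^ 2 / t ^ 2 :=
    sq_div_sq_le_of_le_mul (by positivity) (by exact_mod_cast (Nat.zero_le _).trans_lt htL)
      (by exact_mod_cast htm)
  rw [mul_pow] at herror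
  linarith

end WindowGap

lemma IsProjector.isStarProjection {P : E →L[ℂ] E} (hP : IsProjector P) : IsStarProjection P :=
  ⟨hP.2, hP.1⟩

namespace LatticeSetup

variable {D : ℕ} {N : Fin D → ℕ} (S : LatticeSetup D N E)

lemma commute_of_add_one_lt {s : Fin D} {e f : Cell D N} (h : (e.1 s : ℕ) + 1 < f.1 s) :
    Commute (S.P e) (S.P f) := by
  refine S.locality e f (Finset.disjoint_left.2 fun y he hf ↦ ?_)
  have hye : (y s : ℕ) = e.1 s ∨ (y s : ℕ) = e.1 s + 1 :=
    ((Finset.mem_filter.1 he).2 s).imp_left (congrArg Fin.val)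
  have hyf : (y s : ℕ) = f.1 s ∨ (y s : ℕ) = f.1 s + 1 :=
    ((Finset.mem_filter.1 hf).2 s).imp_left (congrArg Fin.val)
  omega

open Classical in
lemma card_not_commute_le (p : Cell D N → Prop) [DecidablePred p] (e : Cell D N) :
    Finset.card {f : {f // p f} | ¬ Commute (S.P e) (S.P f)} ≤ S.g := by
  refine le_trans ?_ (S.gbound e)
  rw [← Fintype.card_subtype, ← Nat.card_eq_fintype_card]
  exact Nat.card_le_card_of_injective (fun f ↦ ⟨f.1.1, fun h ↦ f.2 (by rw [h]), f.2⟩)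
    fun f f' h ↦ Subtype.ext (Subtype.ext (Subtype.mk.inj h))

lemma cellInRect_update_iff {a τ : Fin D → ℕ} {s : Fin D} {b t : ℕ} (hb : b + t ≤ τ s)
    {e : Cell D N} :
    cellInRect (Function.update a s (a s + b)) (Function.update τ s t) e ↔
      cellInRect a τ e ∧ InWindow t b (e.1 s - a s) := by
  unfold cellInRect InWindow
  refine ⟨fun h ↦ ⟨fun q ↦ ?_, ?_⟩, fun ⟨h, hs⟩ q ↦ ?_⟩
  · have hq := h q
    obtain rfl | hqs := eq_or_ne q s
    · simp only [Function.update_self] at hq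
      omega
    · simpa only [Function.update_of_ne hqs] using hq
  · have hs := h s
    simp only [Function.update_self] at hs
    omega
  · have hq := h q
    obtain rfl | hqs := eq_or_ne q s
    · simp only [Function.update_self]
      omega
    · simpa only [Function.update_of_ne hqs] using hq

lemma Hrect_eq_sum_subtype (a τ : Fin D → ℕ) :
    S.Hrect a τ = ∑ e : {e : Cell D N // cellInRect a τ e}, S.P e :=
  Finset.sum_subtype _ (by simp) _

open Classical in
lemma Hrect_update_eq_sum_window (a : Fin D → ℕ) {τ : Fin D → ℕ} {s : Fin D} {b t : ℕ}
    (hb : b + t ≤ τ s) :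
    S.Hrect (Function.update a s (a s + b)) (Function.update τ s t) =
      ∑ e : {e : Cell D N // cellInRect a τ e} with InWindow t b (e.1.1 s - a s), S.P e := by
  simp only [Hrect, cellInRect_update_iff hb]
  rw [← Finset.filter_filter, Finset.sum_filter]
  exact (Finset.sum_subtype _ (by simp) _).trans (Finset.sum_filter _ _).symm

lemma localGap_nonneg (t : Fin D → ℕ) : 0 ≤ S.localGap t :=
  Real.sInf_nonneg (by rintro _ ⟨a, -, rfl⟩; exact minNonzeroEig_nonneg _)

lemma localGap_le {a t : Fin D → ℕ} (h : ∀ s, a s + t s ≤ N s) :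
    S.localGap t ≤ minNonzeroEig (S.Hrect a t) :=
  csInf_le ⟨0, by rintro _ ⟨a, -, rfl⟩; exact minNonzeroEig_nonneg _⟩ ⟨a, h, rfl⟩

lemma localGap_update_le_of_rect {a τ : Fin D → ℕ} (ha : ∀ q, a q + τ q ≤ N q) {s : Fin D} {t : ℕ}
    (htL : 64 * S.L < t) (htτ : 5 * t ≤ 2 * τ s) :
    S.localGap (Function.update τ s t) ≤
      2 * minNonzeroEig (S.Hrect a τ) + 400 * S.L ^ 2 * S.g ^ 2 / t ^ 2 := by
  classical
  rw [Hrect_eq_sum_subtype]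
  refine le_two_mul_minNonzeroEig_add_of_windows
    (P := fun e : {e : Cell D N // cellInRect a τ e} ↦ S.P e) (x := fun e ↦ e.1.1 s - a s)
    (fun e ↦ (S.proj e).isStarProjection) (fun e ↦ S.card_not_commute_le _ e)
    (fun e ↦ S.layer e) (fun e f ↦ S.layers e f)
    (fun e f hef ↦ S.commute_of_add_one_lt (s := s) ?_) (fun e ↦ ?_) htL htτ
    (S.localGap_nonneg _) fun b hb ↦ ?_
  · have := f.2 s
    omega
  · have := e.2 s
    omega
  · rw [← S.Hrect_update_eq_sum_window a hb]
    refine S.localGap_le fun q ↦ ?_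
    have hq := ha q
    obtain rfl | hqs := eq_or_ne q s
    · simp only [Function.update_self]
      omega
    · simpa only [Function.update_of_ne hqs] using hq

lemma localGap_update_le {τ : Fin D → ℕ} (hτ : ∀ q, τ q ≤ N q) {s : Fin D} {t : ℕ}
    (htL : 64 * S.L < t) (htτ : 5 * t ≤ 2 * τ s) :
    S.localGap (Function.update τ s t) ≤
      2 * S.localGap τ + 400 * S.L ^ 2 * S.g ^ 2 / t ^ 2 := by
  rw [← sub_le_iff_le_add, ← div_le_iff₀' two_pos]
  refine le_csInf ⟨_, 0, by simpa using hτ, rfl⟩ ?_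
  rintro _ ⟨a, ha, rfl⟩
  rw [div_le_iff₀' two_pos, sub_le_iff_le_add]
  exact S.localGap_update_le_of_rect ha htL htτ

lemma Hrect_zero_eq_Hfull : S.Hrect 0 N = S.Hfull := by
  refine Finset.sum_congr (Finset.filter_true_of_mem fun e _ s ↦ ?_) fun _ _ ↦ rfl
  have := e.2 s
  simp only [Pi.zero_apply]
  omega

lemma localGap_self : S.localGap N = S.gap := by
  have hset : {x : ℝ | ∃ a : Fin D → ℕ, (∀ s, a s + N s ≤ N s) ∧
      x = minNonzeroEig (S.Hrect a N)} = {S.gap} := by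
    ext x
    simp [← funext_iff, ← Pi.zero_def, Hrect_zero_eq_Hfull, gap]
  rw [localGap, hset, csInf_singleton]

lemma localGap_piecewise_le {t : Fin D → ℕ} (htL : ∀ s, 64 * S.L < t s)
    (htN : ∀ s, 5 * t s ≤ 2 * N s) {b : ℝ}
    (hb : ∀ s, 400 * (S.L : ℝ) ^ 2 * S.g ^ 2 / t s ^ 2 ≤ b) (s : Finset (Fin D)) :
    S.localGap (s.piecewise t N) ≤ 2 ^ s.card * S.gap + (2 ^ s.card - 1) * b := by
  induction s using Finset.induction_on with
  | empty => simp [localGap_self]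
  | insert q s hq ih =>
    have hle : s.piecewise t N ≤ N :=
      Finset.piecewise_le_of_le_of_le s (fun r ↦ by have := htN r; omega) le_rfl
    have hstep := S.localGap_update_le hle (htL q)
      (by rw [Finset.piecewise_eq_of_notMem _ _ _ hq]; exact htN q)
    rw [Finset.piecewise_insert, Finset.card_insert_of_notMem hq, pow_succ]
    linarith [hb q]

end LatticeSetup

lemma div_sq_le_mul_one_div_sInf {D : ℕ} {t : Fin D → ℕ} (ht : ∀ q, 0 < t q) {b : ℝ} (hb : 0 ≤ b)
    (q : Fin D) :
    b / (t q : ℝ) ^ 2 ≤ b * (1 / sInf {x : ℝ | ∃ q : Fin D, x = (t q : ℝ) ^ 2}) := by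
  set σ := sInf {x : ℝ | ∃ q : Fin D, x = (t q : ℝ) ^ 2}
  have hσ : 0 < σ := by
    have hmem : σ ∈ {x : ℝ | ∃ q : Fin D, x = (t q : ℝ) ^ 2} := by
      refine Set.Nonempty.csInf_mem ⟨_, q, rfl⟩ ?_
      simpa only [Set.range, eq_comm] using Set.finite_range fun q ↦ (t q : ℝ) ^ 2
    obtain ⟨p, hp⟩ := hmem
    have := ht p
    rw [hp]
    positivity
  have hσq : σ ≤ (t q : ℝ) ^ 2 := csInf_le ⟨0, by rintro _ ⟨p, rfl⟩; positivity⟩ ⟨q, rfl⟩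
  rw [mul_one_div]
  gcongr

lemma two_pow_mul_add_le_six_pow_mul_add (D : ℕ) {γ r σ : ℝ} (hγ : 0 ≤ γ) (hσ : 0 ≤ σ) (l : ℝ) :
    2 ^ D * γ + 400 * l ^ 2 * r ^ 2 * (2 ^ D - 1) * (1 / σ) ≤
      6 ^ D * γ + 200 * l ^ 2 * r ^ 2 * 6 ^ D * (1 / σ) := by
  have hle : 2 * (2 ^ D - 1) ≤ (6 : ℝ) ^ D := calc
    2 * (2 ^ D - 1) ≤ ((2 : ℝ) ^ D) ^ 2 := by linarith [sq_nonneg ((2 : ℝ) ^ D - 1)]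
    _ = 4 ^ D := by rw [← pow_mul, mul_comm, pow_mul]; norm_num
    _ ≤ 6 ^ D := by gcongr; norm_num
  calc 2 ^ D * γ + 400 * l ^ 2 * r ^ 2 * (2 ^ D - 1) * (1 / σ)
      = 2 ^ D * γ + 200 * l ^ 2 * r ^ 2 * (2 * (2 ^ D - 1)) * (1 / σ) := by ring
    _ ≤ 6 ^ D * γ + 200 * l ^ 2 * r ^ 2 * 6 ^ D * (1 / σ) := by gcongr; norm_num

theorem stmt_1_general {D : ℕ} {N : Fin D → ℕ} (S : LatticeSetup D N E) (t : Fin D → ℕ)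
    (htL : ∀ s, 64 * S.L < t s) (htN : ∀ s, 5 * t s ≤ 2 * N s) :
    S.localGap t ≤ 2 ^ D * S.gap +
      400 * (S.L : ℝ) ^ 2 * (S.g : ℝ) ^ 2 * (2 ^ D - 1) *
        (1 / sInf {x : ℝ | ∃ q : Fin D, x = (t q : ℝ) ^ 2}) := by
  have ht0 (q) : 0 < t q := (Nat.zero_le _).trans_lt (htL q)
  have hbound := S.localGap_piecewise_le htL htN
    (div_sq_le_mul_one_div_sInf ht0 (by positivity)) Finset.univ
  rw [Finset.piecewise_univ, Finset.card_univ, Fintype.card_fin] at hbound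
  linarith

/-- for a frustration-free local Hamiltonian on the `D`-dimensional lattice
`[1:n₁]×…×[1:n_D]` as in the setup, with parameters `g, L ≤ (3D)^D`, spectral gap `γ`, and
local gaps `γ(t₁,…,t_D)`: if `2⁶·4^D·L < t_s < n_s/5` for every `s` and `γ ≤ g²/16^D`,
then `γ(t₁,…,t_D) ≤ 6^D·γ + 200·L²·g²·6^D·(1/min_q t_q²)`. -/
theorem stmt_1 {D : ℕ} (hD : 0 < D) {N : Fin D → ℕ} (S : LatticeSetup D N E)
    (hgD : S.g ≤ (3 * D) ^ D) (hLD : S.L ≤ (3 * D) ^ D)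
    (t : Fin D → ℕ)
    (ht1 : ∀ s, 2 ^ 6 * 4 ^ D * S.L < t s) (ht2 : ∀ s, 5 * t s < N s)
    (hγ : S.gap ≤ (S.g : ℝ) ^ 2 / 16 ^ D) :
    S.localGap t ≤ 6 ^ D * S.gap +
      200 * (S.L : ℝ) ^ 2 * (S.g : ℝ) ^ 2 * 6 ^ D *
        (1 / sInf {x : ℝ | ∃ q : Fin D, x = (t q : ℝ) ^ 2}) := by
  have htL (s) : 64 * S.L < t s :=
    (Nat.mul_le_mul_right _ (Nat.le_mul_of_pos_right _ (by positivity))).trans_lt (ht1 s)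
  exact (stmt_1_general S t htL fun s ↦ by have := ht2 s; omega).trans <|
    two_pow_mul_add_le_six_pow_mul_add D (minNonzeroEig_nonneg _)
      (Real.sInf_nonneg (by rintro _ ⟨q, rfl⟩; positivity)) _
end

section
/- Fix ν ∈ (0, 1/4] and a real number m > 0. Then the polynomial step_{m,ν} satisfies step_{m,ν}(1) = 1, and |step_{m,ν}(x)| ≤ 1/(1 + m²ν/(2(1−ν))) for all x ∈ (0, 1−ν). -/
/-- The polynomial `step_{m,ν}(x) = T_⌈m⌉(−1 + 2x/(1−ν)) / T_⌈m⌉((1+ν)/(1−ν))`,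
where `T_k` is the Chebyshev polynomial of the first kind. -/
noncomputable def stepPoly (m ν : ℝ) (x : ℝ) : ℝ :=
  (Polynomial.Chebyshev.T ℝ ⌈m⌉).eval (-1 + 2 * x / (1 - ν)) /
    (Polynomial.Chebyshev.T ℝ ⌈m⌉).eval ((1 + ν) / (1 - ν))

/-!
The map `x ↦ -1 + 2x/(1-ν)` sends `[0, 1-ν]` onto `[-1, 1]`, where `|T_n| ≤ 1`, and sends `1` to
`(1+ν)/(1-ν) ≥ 1`. To the right of `1`, the graph of `T_n` lies above its tangent line at `1`,
which has slope `n²`; hence the normalizing denominator is at least `1 + 2n²ν/(1-ν)`.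
The tangent-line bound is the sum of the bounds `T_{k+1} - T_k ≥ (2k+1)(x-1)`, and these hold
because each increment exceeds the previous one by `2(x-1) T_{k+1} ≥ 2(x-1)`.
-/

open Polynomial Chebyshev

section ChebyshevTangentLine

variable {x : ℝ}

theorem two_mul_add_one_mul_sub_one_le_eval_T_sub_eval_T (hx : 1 ≤ x) (n : ℕ) :
    (2 * n + 1) * (x - 1) ≤ (T ℝ (n + 1)).eval x - (T ℝ n).eval x := by
  induction n with
  | zero => simp
  | succ n ih =>
    have increment_succ : (T ℝ (n + 2)).eval x - (T ℝ (n + 1)).eval x =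
        (T ℝ (n + 1)).eval x - (T ℝ n).eval x + 2 * (x - 1) * (T ℝ (n + 1)).eval x := by
      simp only [T_add_two, eval_sub, eval_mul, eval_ofNat, eval_X]
      ring
    have one_le_T : 1 ≤ (T ℝ (n + 1)).eval x := one_le_eval_T_real _ hx
    push_cast
    rw [add_assoc (n : ℤ), one_add_one_eq_two, increment_succ]
    calc (2 * ((n : ℝ) + 1) + 1) * (x - 1)
        = (2 * n + 1) * (x - 1) + 2 * (x - 1) * 1 := by ring
      _ ≤ _ := by gcongr

theorem one_add_natCast_sq_mul_sub_one_le_eval_T (hx : 1 ≤ x) (n : ℕ) :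
    1 + (n : ℝ) ^ 2 * (x - 1) ≤ (T ℝ n).eval x := by
  induction n with
  | zero => simp
  | succ n ih =>
    have increment := two_mul_add_one_mul_sub_one_le_eval_T_sub_eval_T hx n
    push_cast
    linarith

theorem one_add_sq_mul_sub_one_le_eval_T (hx : 1 ≤ x) (n : ℤ) :
    1 + (n : ℝ) ^ 2 * (x - 1) ≤ (T ℝ n).eval x := by
  have natAbs_bound := one_add_natCast_sq_mul_sub_one_le_eval_T hx n.natAbs
  rwa [T_natAbs, Nat.cast_natAbs, Int.cast_abs, sq_abs] at natAbs_bound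

end ChebyshevTangentLine

theorem abs_neg_one_add_two_mul_div_le_one {c x : ℝ} (hx : x ∈ Set.Icc 0 c) :
    |-1 + 2 * x / c| ≤ 1 := by
  obtain ⟨x_nonneg, x_le⟩ := hx
  have div_nonneg : 0 ≤ x / c := div_nonneg x_nonneg (x_nonneg.trans x_le)
  have div_le_one : x / c ≤ 1 := div_le_one_of_le₀ x_le (x_nonneg.trans x_le)
  rw [mul_div_assoc, abs_le]
  constructor <;> linarith

section StepPoly

variable {ν : ℝ}

theorem one_le_one_add_div_one_sub (hν : ν ∈ Set.Ico 0 1) : 1 ≤ (1 + ν) / (1 - ν) := by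
  obtain ⟨ν_nonneg, ν_lt⟩ := hν
  rw [one_le_div (sub_pos.2 ν_lt)]
  linarith

theorem stepPoly_one (hν : ν ∈ Set.Ico 0 1) (m : ℝ) : stepPoly m ν 1 = 1 := by
  have one_sub_ne_zero : 1 - ν ≠ 0 := (sub_pos.2 hν.2).ne'
  have map_one : -1 + 2 * 1 / (1 - ν) = (1 + ν) / (1 - ν) := by
    field_simp
    ring
  have one_le_T := one_le_eval_T_real ⌈m⌉ (one_le_one_add_div_one_sub hν)
  rw [stepPoly, map_one, div_self (by positivity)]

theorem abs_stepPoly_le (hν : ν ∈ Set.Ico 0 1) (m : ℝ) {x : ℝ} (hx : x ∈ Set.Icc 0 (1 - ν)) :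
    |stepPoly m ν x| ≤ 1 / (1 + 2 * (⌈m⌉ : ℝ) ^ 2 * ν / (1 - ν)) := by
  have ν_nonneg : 0 ≤ ν := hν.1
  have one_sub_pos : 0 < 1 - ν := sub_pos.2 hν.2
  have numerator_le : |(T ℝ ⌈m⌉).eval (-1 + 2 * x / (1 - ν))| ≤ 1 :=
    abs_eval_T_real_le_one _ (abs_neg_one_add_two_mul_div_le_one hx)
  have le_denominator : 1 + 2 * (⌈m⌉ : ℝ) ^ 2 * ν / (1 - ν) ≤
      (T ℝ ⌈m⌉).eval ((1 + ν) / (1 - ν)) := by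
    calc 1 + 2 * (⌈m⌉ : ℝ) ^ 2 * ν / (1 - ν)
        = 1 + (⌈m⌉ : ℝ) ^ 2 * ((1 + ν) / (1 - ν) - 1) := by
          field_simp
          ring
      _ ≤ _ := one_add_sq_mul_sub_one_le_eval_T (one_le_one_add_div_one_sub hν) _
  rw [stepPoly, abs_div]
  gcongr
  exact le_denominator.trans (le_abs_self _)

end StepPoly

theorem stmt_2_general {ν m : ℝ} (hν : ν ∈ Set.Ico 0 1) (hm : 0 ≤ m) :
    stepPoly m ν 1 = 1 ∧
      ∀ x ∈ Set.Icc 0 (1 - ν), |stepPoly m ν x| ≤ 1 / (1 + 2 * m ^ 2 * ν / (1 - ν)) := by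
  refine ⟨stepPoly_one hν m, fun x hx ↦ (abs_stepPoly_le hν m hx).trans ?_⟩
  have ν_nonneg : 0 ≤ ν := hν.1
  have one_sub_pos : 0 < 1 - ν := sub_pos.2 hν.2
  gcongr
  exact Int.le_ceil m

/-- for `ν ∈ (0, 1/4]` and `m > 0`, one has `step_{m,ν}(1) = 1` and
`|step_{m,ν}(x)| ≤ 1/(1 + m²ν/(2(1−ν)))` for all `x ∈ (0, 1−ν)`. -/
theorem stmt_2 (ν : ℝ) (hν : ν ∈ Set.Ioc (0 : ℝ) (1 / 4)) (m : ℝ) (hm : 0 < m) :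
    stepPoly m ν 1 = 1 ∧
      ∀ x ∈ Set.Ioo (0 : ℝ) (1 - ν),
        |stepPoly m ν x| ≤ 1 / (1 + m ^ 2 * ν / (2 * (1 - ν))) := by
  obtain ⟨ν_pos, ν_le⟩ := hν
  have one_sub_pos : 0 < 1 - ν := by linarith
  obtain ⟨step_one, step_le⟩ := stmt_2_general ⟨ν_pos.le, sub_pos.1 one_sub_pos⟩ hm.le
  refine ⟨step_one, fun x hx ↦ (step_le x (Set.Ioo_subset_Icc_self hx)).trans ?_⟩
  gcongr <;> linarith [sq_nonneg m]
end

section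
/- Fix ν ∈ (0, 1/4] and a real number m > 0. Then T_⌈m⌉((1+ν)/(1−ν)) ≥ 1 + m²ν/(2(1−ν)). -/
/-!
For `x ≥ 1` the values `T_n(x)` are convex in `n`: the recurrence says that their second
difference is `2 (x - 1) T_{n+1}(x)`, which is at least `2 (x - 1)` because `T_{n+1}(x) ≥ 1`.
Summing twice from `T_0(x) = 1` and `T_1(x) = x` gives the tangent line bound
`T_n(x) ≥ 1 + n² (x - 1)`. At `x = (1 + ν) / (1 - ν)` the factor `x - 1` is `2ν / (1 - ν)`, four
times the `ν / (2 (1 - ν))` needed.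
-/

section TangentLine

open Polynomial.Chebyshev

theorem eval_T_add_two_sub_eval_T_add_one {R : Type*} [CommRing R] (n : ℤ) (x : R) :
    (T R (n + 2)).eval x - (T R (n + 1)).eval x =
      (T R (n + 1)).eval x - (T R n).eval x + 2 * (x - 1) * (T R (n + 1)).eval x := by
  simp only [T_add_two, Polynomial.eval_sub, Polynomial.eval_mul, Polynomial.eval_ofNat,
    Polynomial.eval_X]
  ring

variable {R : Type*} [CommRing R] [LinearOrder R] [IsStrictOrderedRing R] {x : R}

-- The two bounds feed each other: the first at `n + 1` gives `1 ≤ T_{n+1}(x)`, which the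
-- second difference needs.
theorem one_add_sq_mul_le_eval_T_and_le_eval_T_add_one_sub (hx : 1 ≤ x) (n : ℕ) :
    1 + (n : R) ^ 2 * (x - 1) ≤ (T R n).eval x ∧
      (2 * n + 1) * (x - 1) ≤ (T R (n + 1)).eval x - (T R n).eval x := by
  have hx₀ : 0 ≤ x - 1 := sub_nonneg.2 hx
  induction n with
  | zero => simp
  | succ n ih =>
    obtain ⟨value_bound, increment_bound⟩ := ih
    have next_value_bound : 1 + ((n : R) + 1) ^ 2 * (x - 1) ≤ (T R (n + 1)).eval x := by
      linarith
    have one_le_next : 1 ≤ (T R (n + 1)).eval x :=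
      (le_add_of_nonneg_right (by positivity)).trans next_value_bound
    have second_difference_bound : x - 1 ≤ (x - 1) * (T R (n + 1)).eval x :=
      le_mul_of_one_le_right hx₀ one_le_next
    push_cast
    refine ⟨next_value_bound, ?_⟩
    rw [add_assoc (n : ℤ), one_add_one_eq_two, eval_T_add_two_sub_eval_T_add_one]
    linarith

theorem one_add_sq_mul_le_eval_T (hx : 1 ≤ x) (n : ℤ) :
    1 + (n : R) ^ 2 * (x - 1) ≤ (T R n).eval x := by
  have h := (one_add_sq_mul_le_eval_T_and_le_eval_T_add_one_sub hx n.natAbs).1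
  rwa [T_natAbs, Nat.cast_natAbs, Int.cast_abs, sq_abs] at h

theorem one_add_sq_mul_le_eval_T_ceil [FloorRing R] (hx : 1 ≤ x) {m : R} (hm : 0 ≤ m) :
    1 + m ^ 2 * (x - 1) ≤ (T R ⌈m⌉).eval x := by
  have : 0 ≤ x - 1 := sub_nonneg.2 hx
  calc 1 + m ^ 2 * (x - 1)
    _ ≤ 1 + (⌈m⌉ : R) ^ 2 * (x - 1) := by gcongr; exact Int.le_ceil m
    _ ≤ (T R ⌈m⌉).eval x := one_add_sq_mul_le_eval_T hx ⌈m⌉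

end TangentLine

theorem stmt_3_general {K : Type*} [Field K] [LinearOrder K] [IsStrictOrderedRing K] [FloorRing K]
    {ν : K} (hν : ν ∈ Set.Ico (0 : K) 1) {m : K} (hm : 0 ≤ m) :
    1 + 2 * m ^ 2 * ν / (1 - ν) ≤
      (Polynomial.Chebyshev.T K ⌈m⌉).eval ((1 + ν) / (1 - ν)) := by
  have hpos : 0 < 1 - ν := sub_pos.2 hν.2
  have hx : 1 ≤ (1 + ν) / (1 - ν) := by
    rw [one_le_div hpos]
    linarith [hν.1]
  convert one_add_sq_mul_le_eval_T_ceil hx hm using 2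
  field_simp
  ring

/-- for `ν ∈ (0, 1/4]` and a real `m > 0`,
`T_⌈m⌉((1+ν)/(1−ν)) ≥ 1 + m²ν/(2(1−ν))`, where `T_k` is the Chebyshev polynomial of the
first kind. -/
theorem stmt_3 (ν : ℝ) (hν : ν ∈ Set.Ioc (0 : ℝ) (1 / 4)) (m : ℝ) (hm : 0 < m) :
    1 + m ^ 2 * ν / (2 * (1 - ν)) ≤ (Polynomial.Chebyshev.T ℝ ⌈m⌉).eval ((1 + ν) / (1 - ν)) := by
  obtain ⟨hν₀, hν₁⟩ := hν
  have hpos : 0 < 1 - ν := by linarith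
  refine le_trans ?_ (stmt_3_general ⟨hν₀.le, sub_pos.1 hpos⟩ hm.le)
  gcongr <;> linarith [sq_nonneg m]
end

section
/- Let a, b ∈ ℂ satisfy |a|² + |b|² = 1, and let 0 ≤ ν ≤ (3−√5)/2. Then the 2×2 Hermitian matrix [[1+|a|², a·conj(b)], [conj(a)·b, |b|²]] is bounded above in the Loewner (positive-semidefinite) order by the diagonal matrix [[2 − ν|b|², 0], [0, 2 − ν]]. -/
open scoped ComplexOrder

/-!
A Hermitian `2 × 2` matrix is positive semidefinite as soon as its trace and determinant are
nonnegative. For `‖a‖ ^ 2 + ‖b‖ ^ 2 ≤ 1` the determinant of the difference of the two matrices is at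
least `‖b‖ ^ 2 * ((1 - ν) ^ 2 - ν * ‖a‖ ^ 2)`. Since `‖a‖ ≤ 1`, this is nonnegative when
`ν ≤ (1 - ν) ^ 2`, and the threshold `(3 - √5) / 2` is the smaller root of `ν = (1 - ν) ^ 2`.
-/

section FinTwo

variable {𝕜 : Type*} [RCLike 𝕜]

theorem posSemidef_fin_two_iff_trace_det_nonneg {A : Matrix (Fin 2) (Fin 2) 𝕜}
    (hA : A.IsHermitian) : A.PosSemidef ↔ 0 ≤ A.trace ∧ 0 ≤ A.det := by
  refine ⟨fun h ↦ ⟨h.trace_nonneg, h.det_nonneg⟩, fun ⟨htrace, hdet⟩ ↦ ?_⟩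
  have hsum : 0 ≤ hA.eigenvalues 0 + hA.eigenvalues 1 := by
    rw [hA.trace_eq_sum_eigenvalues, Fin.sum_univ_two] at htrace
    exact_mod_cast htrace
  have hprod : 0 ≤ hA.eigenvalues 0 * hA.eigenvalues 1 := by
    rw [hA.det_eq_prod_eigenvalues, Fin.prod_univ_two] at hdet
    exact_mod_cast hdet
  rw [hA.posSemidef_iff_eigenvalues_nonneg, Pi.le_def, Fin.forall_fin_two]
  constructor <;> simp only [Pi.zero_apply] <;> nlinarith

theorem posSemidef_of_fin_two_iff (p q : ℝ) (z : 𝕜) :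
    (!![(p : 𝕜), z; star z, (q : 𝕜)]).PosSemidef ↔ 0 ≤ p + q ∧ ‖z‖ ^ 2 ≤ p * q := by
  have hHermitian : (!![(p : 𝕜), z; star z, (q : 𝕜)]).IsHermitian := by
    ext i j
    fin_cases i <;> fin_cases j <;> simp
  have hdet : (!![(p : 𝕜), z; star z, (q : 𝕜)]).det = ((p * q - ‖z‖ ^ 2 : ℝ) : 𝕜) := by
    rw [Matrix.det_fin_two_of, RCLike.star_def, RCLike.mul_conj]
    push_cast
    rfl
  rw [posSemidef_fin_two_iff_trace_det_nonneg hHermitian, hdet, Matrix.trace_fin_two_of,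
    ← RCLike.ofReal_add, RCLike.ofReal_nonneg, RCLike.ofReal_nonneg, sub_nonneg]

end FinTwo

section Scalar

variable {s t ν : ℝ}

theorem lt_one_of_le_three_sub_sqrt_five_div_two (hν : ν ≤ (3 - √5) / 2) : ν < 1 := by
  have : 1 < √5 := Real.lt_sqrt_of_sq_lt (by norm_num)
  linarith

theorem le_one_sub_sq_of_le_three_sub_sqrt_five_div_two (hν : ν ≤ (3 - √5) / 2) :
    ν ≤ (1 - ν) ^ 2 := by
  have hsq : √5 ^ 2 = 5 := Real.sq_sqrt (by norm_num)
  have hfactor : (1 - ν) ^ 2 - ν = ((3 - √5) / 2 - ν) * ((3 + √5) / 2 - ν) := by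
    linear_combination hsq / 4
  have hlarger : ν ≤ (3 + √5) / 2 := by linarith [Real.sqrt_nonneg 5]
  exact sub_nonneg.mp (hfactor ▸ mul_nonneg (sub_nonneg.mpr hν) (sub_nonneg.mpr hlarger))

theorem mul_le_sub_mul_sub_of_le_one_sub_sq (hs : 0 ≤ s) (ht : 0 ≤ t) (hst : s + t ≤ 1)
    (hν : ν ≤ 1) (hνsq : ν ≤ (1 - ν) ^ 2) :
    s * t ≤ (2 - ν * t - (1 + s)) * (2 - ν - t) := by
  have hνs : ν * s ≤ (1 - ν) ^ 2 := by
    rcases le_total 0 ν with hν0 | hν0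
    · exact (mul_le_of_le_one_right hν0 (by linarith)).trans hνsq
    · exact (mul_nonpos_of_nonpos_of_nonneg hν0 hs).trans (sq_nonneg _)
  have hleft : (1 - ν) * t ≤ 2 - ν * t - (1 + s) := by linarith
  have hright : 1 - ν + s ≤ 2 - ν - t := by linarith
  have hleft_nonneg : 0 ≤ (1 - ν) * t := mul_nonneg (by linarith) ht
  calc s * t ≤ ((1 - ν) * (1 - ν + s)) * t := by gcongr; linarith
    _ = ((1 - ν) * t) * (1 - ν + s) := by ring
    _ ≤ (2 - ν * t - (1 + s)) * (2 - ν - t) := by gcongr; linarith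

end Scalar

theorem stmt_8_general {𝕜 : Type*} [RCLike 𝕜] (a b : 𝕜) (hab : ‖a‖ ^ 2 + ‖b‖ ^ 2 ≤ 1) (ν : ℝ)
    (hν : ν ≤ (3 - √5) / 2) :
    (!![((2 - ν * ‖b‖ ^ 2 : ℝ) : 𝕜), 0; 0, ((2 - ν : ℝ) : 𝕜)] -
      !![((1 + ‖a‖ ^ 2 : ℝ) : 𝕜), a * (starRingEnd 𝕜) b;
         (starRingEnd 𝕜) a * b, ((‖b‖ ^ 2 : ℝ) : 𝕜)]).PosSemidef := by
  have hν_lt_one : ν < 1 := lt_one_of_le_three_sub_sqrt_five_div_two hν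
  have hdet : ‖a‖ ^ 2 * ‖b‖ ^ 2 ≤ (2 - ν * ‖b‖ ^ 2 - (1 + ‖a‖ ^ 2)) * (2 - ν - ‖b‖ ^ 2) :=
    mul_le_sub_mul_sub_of_le_one_sub_sq (sq_nonneg _) (sq_nonneg _) hab hν_lt_one.le
      (le_one_sub_sq_of_le_three_sub_sqrt_five_div_two hν)
  have htrace : 0 ≤ (2 - ν * ‖b‖ ^ 2 - (1 + ‖a‖ ^ 2)) + (2 - ν - ‖b‖ ^ 2) := by
    nlinarith [sq_nonneg ‖a‖, sq_nonneg ‖b‖]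
  have hz : ‖-(a * (starRingEnd 𝕜) b)‖ ^ 2 = ‖a‖ ^ 2 * ‖b‖ ^ 2 := by
    rw [norm_neg, norm_mul, RCLike.norm_conj, mul_pow]
  convert (posSemidef_of_fin_two_iff _ _ _).mpr ⟨htrace, hz.trans_le hdet⟩ using 1
  ext i j
  fin_cases i <;> fin_cases j <;> simp [mul_comm]

/-- for `a b : ℂ` with `|a|² + |b|² = 1` and `0 ≤ ν ≤ (3−√5)/2`, the Hermitian
matrix `[[1+|a|², a·conj b],[conj a·b, |b|²]]` is bounded above, in the Loewner order, by the
diagonal matrix `[[2 − ν|b|², 0],[0, 2 − ν]]`. -/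
theorem stmt_8 (a b : ℂ) (hab : ‖a‖ ^ 2 + ‖b‖ ^ 2 = 1) (ν : ℝ) (hν0 : 0 ≤ ν)
    (hν1 : ν ≤ (3 - Real.sqrt 5) / 2) :
    (!![((2 - ν * ‖b‖ ^ 2 : ℝ) : ℂ), 0; 0, ((2 - ν : ℝ) : ℂ)] -
      !![((1 + ‖a‖ ^ 2 : ℝ) : ℂ), a * (starRingEnd ℂ) b;
         (starRingEnd ℂ) a * b, ((‖b‖ ^ 2 : ℝ) : ℂ)]).PosSemidef :=
  stmt_8_general a b hab.le ν hν1
end
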